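/- arXiv:1106.3143 — 2 statements merged into one kernel-verified Lean document; each statement's English description precedes it below -/
import Mathlib

section
/- Let A and B be C*-algebras such that at least one of A and B is finite-dimensional. Then A ⊗̂ B is a symmetric operator algebra; in particular, A ⊗̂ B is *-isomorphic to the minimal (spatial) C*-tensor product A ⊗_min B. -/
open scoped TensorProduct
open Pointwise

universe u

noncomputable section

/-- A C⋆-norm on a complex `*`-algebra.  On a matrix algebra over a C⋆-algebra such a
norm is unique, namely the canonical C⋆-norm. -/
structure IsCStarNorm {M : Type*} [NonUnitalRing M] [StarRing M] [Module ℂ M]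
    (N : M → ℝ) : Prop where
  add_le : ∀ x y, N (x + y) ≤ N x + N y
  smul_eq : ∀ (c : ℂ) (x : M), N (c • x) = ‖c‖ * N x
  eq_zero_of : ∀ x, N x = 0 → x = 0
  mul_le : ∀ x y, N (x * y) ≤ N x * N y
  star_mul_self : ∀ x, N (star x * x) = N x * N x

/-- The operator space projective tensor norm `‖·‖_∧` on the algebraic tensor product
`A ⊗ B`, relative to given families of matrix norms on `A` and `B`:
`‖u‖_∧ = inf { ‖α‖ ‖v‖ ‖w‖ ‖β‖ : u = α (v ⊗ w) β }` where `v ∈ M_p(A)`, `w ∈ M_q(B)`,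
`α ∈ M_{1,pq}(ℂ)` and `β ∈ M_{pq,1}(ℂ)` (row and column vectors carrying the Euclidean
norm, which is their norm as scalar matrices). -/
noncomputable def osProjNorm {A B : Type u}
    [AddCommGroup A] [Module ℂ A] [AddCommGroup B] [Module ℂ B]
    (NA : ∀ p : ℕ, Matrix (Fin p) (Fin p) A → ℝ)
    (NB : ∀ q : ℕ, Matrix (Fin q) (Fin q) B → ℝ) (u : A ⊗[ℂ] B) : ℝ :=
  sInf { r : ℝ | ∃ (p q : ℕ) (α : Fin p × Fin q → ℂ) (v : Matrix (Fin p) (Fin p) A)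
      (w : Matrix (Fin q) (Fin q) B) (β : Fin p × Fin q → ℂ),
      u = ∑ ik : Fin p × Fin q, ∑ jl : Fin p × Fin q,
            (α ik * β jl) • (v ik.1 jl.1 ⊗ₜ[ℂ] w ik.2 jl.2) ∧
      r = Real.sqrt (∑ ik, ‖α ik‖ ^ 2) * NA p v * NB q w *
            Real.sqrt (∑ jl, ‖β jl‖ ^ 2) }

/-- `X` is a completion of the algebraic tensor product `A ⊗ B` with respect to the
norm `ν`, via the (necessarily isometric) dense embedding `ι`, and the multiplication and
involution of `X` are the canonical ones induced from `A` and `B`.  Applied with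
`ν = osProjNorm NA NB` (for the canonical matrix C⋆-norms `NA`, `NB`) this characterizes
the Banach `*`-algebra `A ⊗̂ B` (the operator space projective tensor product) up to
isometric `*`-isomorphism; applied with `ν = bsProjNorm` it characterizes the Banach
space projective tensor product `A ⊗_γ B`. -/
structure IsTensorCompletion {A B : Type u} [NonUnitalRing A] [StarRing A] [Module ℂ A]
    [NonUnitalRing B] [StarRing B] [Module ℂ B] (ν : A ⊗[ℂ] B → ℝ)
    (X : Type u) [NonUnitalNormedRing X] [StarRing X] [NormedSpace ℂ X] [CompleteSpace X]
    (ι : A ⊗[ℂ] B →ₗ[ℂ] X) : Prop where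
  norm_eq : ∀ u, ‖ι u‖ = ν u
  dense : DenseRange ι
  mul_tmul : ∀ (a c : A) (b d : B),
    ι (a ⊗ₜ[ℂ] b) * ι (c ⊗ₜ[ℂ] d) = ι ((a * c) ⊗ₜ[ℂ] (b * d))
  star_tmul : ∀ (a : A) (b : B), star (ι (a ⊗ₜ[ℂ] b)) = ι (star a ⊗ₜ[ℂ] star b)

/-- The product ideal `S ⊗̂ T`: the closure in `X` (a completion of `A ⊗ B`) of the span of
elementary tensors `a ⊗ b` with `a ∈ S`, `b ∈ T`. -/
def tensorIdeal {A B : Type u} [NonUnitalRing A] [StarRing A] [Module ℂ A]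
    [NonUnitalRing B] [StarRing B] [Module ℂ B]
    {X : Type u} [NonUnitalNormedRing X] [StarRing X] [NormedSpace ℂ X] [CompleteSpace X]
    (ι : A ⊗[ℂ] B →ₗ[ℂ] X) (S : Set A) (T : Set B) : Set X :=
  closure (ι '' (Submodule.span ℂ (Set.image2 (fun a b => a ⊗ₜ[ℂ] b) S T)))

/-- A closed prime (two-sided) ideal of a Banach algebra: a proper closed two-sided ideal `K`
such that whenever the product of two closed two-sided ideals is contained in `K`, one of them
is contained in `K`. -/
def IsClosedPrimeIdeal {Y : Type u} [NonUnitalNormedRing Y] (K : TwoSidedIdeal Y) : Prop :=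
  IsClosed (K : Set Y) ∧ (K : Set Y) ≠ Set.univ ∧
    ∀ I J : TwoSidedIdeal Y, IsClosed (I : Set Y) → IsClosed (J : Set Y) →
      (∀ x ∈ I, ∀ y ∈ J, x * y ∈ K) → (I : Set Y) ⊆ (K : Set Y) ∨ (J : Set Y) ⊆ (K : Set Y)

/-- An irreducible continuous `*`-representation of a Banach `*`-algebra `Y` on a complex
Hilbert space. -/
structure IrreducibleRepOn (Y : Type u)
    [NonUnitalNormedRing Y] [StarRing Y] [NormedSpace ℂ Y] where
  H : Type u
  [normH : NormedAddCommGroup H]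
  [ipsH : InnerProductSpace ℂ H]
  [csH : CompleteSpace H]
  π : Y →⋆ₙₐ[ℂ] (H →L[ℂ] H)
  continuous : Continuous π
  nonzero : ∃ y, π y ≠ 0
  irreducible : ∀ S : Submodule ℂ H, IsClosed (S : Set H) →
    (∀ y : Y, ∀ v ∈ S, π y v ∈ S) → S = ⊥ ∨ S = ⊤

/-- A primitive ideal: the kernel of an irreducible `*`-representation. -/
def IsPrimitiveIdeal {Y : Type u} [NonUnitalNormedRing Y] [StarRing Y] [NormedSpace ℂ Y]
    (K : TwoSidedIdeal Y) : Prop :=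
  ∃ ρ : IrreducibleRepOn Y, ∀ y, y ∈ K ↔ ρ.π y = 0

/-- A subset `K` of a ring is modular (as an ideal) if there is a relative unit `e`
with `x * e - x ∈ K` and `e * x - x ∈ K` for every `x`. -/
def IsModularIdealSet {Y : Type u} [NonUnitalRing Y] (K : Set Y) : Prop :=
  ∃ e : Y, ∀ x : Y, x * e - x ∈ K ∧ e * x - x ∈ K

/-- A maximal modular (two-sided) ideal: a modular ideal which is proper and maximal among
proper two-sided ideals. -/
def IsMaximalModularIdeal {Y : Type u} [NonUnitalRing Y] (K : TwoSidedIdeal Y) : Prop :=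
  IsModularIdealSet (K : Set Y) ∧ (K : Set Y) ≠ Set.univ ∧
    ∀ L : TwoSidedIdeal Y, (K : Set Y) ⊆ (L : Set Y) →
      (L : Set Y) = (K : Set Y) ∨ (L : Set Y) = Set.univ

/-- The operator norm of a `p × p` matrix of bounded operators on a Hilbert space `H`,
viewed as an operator on the `ℓ²`-direct sum `H ⊕ ⋯ ⊕ H`. -/
noncomputable def opMatrixNorm {H : Type u} [NormedAddCommGroup H] [InnerProductSpace ℂ H]
    {p : ℕ} (T : Matrix (Fin p) (Fin p) (H →L[ℂ] H)) : ℝ :=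
  sSup { r : ℝ | ∃ x : Fin p → H, (∑ i, ‖x i‖ ^ 2) ≤ 1 ∧
      r = Real.sqrt (∑ i, ‖∑ j, (T i j) (x j)‖ ^ 2) }

/-- An operator algebra structure on a Banach algebra `Y`: a bicontinuous algebra
homomorphism of `Y` into the bounded operators on some Hilbert space. -/
structure OperatorAlgebraEmbedding (Y : Type u) [NonUnitalNormedRing Y] [NormedSpace ℂ Y] where
  H : Type u
  [normH : NormedAddCommGroup H]
  [ipsH : InnerProductSpace ℂ H]
  [csH : CompleteSpace H]
  ρ : Y →ₙₐ[ℂ] (H →L[ℂ] H)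
  c : ℝ
  C : ℝ
  c_pos : 0 < c
  lower : ∀ y, c * ‖y‖ ≤ ‖ρ y‖
  upper : ∀ y, ‖ρ y‖ ≤ C * ‖y‖

/-- The matrix norms on `Y` induced by an operator algebra embedding, giving `Y` its
operator space structure: the norm of `v ∈ M_p(Y)` is the operator norm of the matrix
of operators obtained by applying the embedding entrywise. -/
noncomputable def OperatorAlgebraEmbedding.matrixNorm {Y : Type u}
    [NonUnitalNormedRing Y] [NormedSpace ℂ Y] (e : OperatorAlgebraEmbedding Y)
    (p : ℕ) (v : Matrix (Fin p) (Fin p) Y) : ℝ :=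
  letI := e.normH; letI := e.ipsH
  opMatrixNorm (v.map e.ρ)

/-- The Banach space projective tensor norm `‖·‖_γ` on the algebraic tensor product. -/
noncomputable def bsProjNorm {A B : Type u} [NonUnitalNormedRing A] [NormedSpace ℂ A]
    [NonUnitalNormedRing B] [NormedSpace ℂ B] (u : A ⊗[ℂ] B) : ℝ :=
  sInf { r : ℝ | ∃ (n : ℕ) (a : Fin n → A) (b : Fin n → B),
      u = ∑ i, a i ⊗ₜ[ℂ] b i ∧ r = ∑ i, ‖a i‖ * ‖b i‖ }

/-- A C⋆-algebra `A` is subhomogeneous if there is `n : ℕ` bounding the (finite)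
dimensions of all its irreducible `*`-representations. -/
def IsSubhomogeneous (A : Type u) [NonUnitalCStarAlgebra A] : Prop :=
  ∃ n : ℕ, ∀ ρ : IrreducibleRepOn A,
    letI := ρ.normH
    letI := ρ.ipsH
    FiniteDimensional ℂ ρ.H ∧ Module.finrank ℂ ρ.H ≤ n



/-- A witness that `X` (a realization of `A ⊗̂ B`) is `*`-isomorphic to the minimal (spatial)
C⋆-tensor product `A ⊗_min B`: a C⋆-algebra `Y` containing the algebraic tensor product
densely and injectively whose norm is minimal among all C⋆-norms on `A ⊗ B`, together with a
`*`-isomorphism `X ≃ Y` extending the identity on the algebraic tensor product. -/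
structure MinTensorWitness (A B : Type u)
    [NonUnitalCStarAlgebra A] [NonUnitalCStarAlgebra B]
    (X : Type u) [NonUnitalNormedRing X] [StarRing X] [NormedSpace ℂ X] [CompleteSpace X]
    (ι : A ⊗[ℂ] B →ₗ[ℂ] X) where
  Y : Type u
  [algY : NonUnitalCStarAlgebra Y]
  ιY : A ⊗[ℂ] B →ₗ[ℂ] Y
  inj : Function.Injective ιY
  dense : DenseRange ιY
  mul_tmul : ∀ (a c : A) (b d : B),
    ιY (a ⊗ₜ[ℂ] b) * ιY (c ⊗ₜ[ℂ] d) = ιY ((a * c) ⊗ₜ[ℂ] (b * d))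
  star_tmul : ∀ (a : A) (b : B), star (ιY (a ⊗ₜ[ℂ] b)) = ιY (star a ⊗ₜ[ℂ] star b)
  minimal : ∀ (Z : Type u) [NonUnitalCStarAlgebra Z] (ιZ : A ⊗[ℂ] B →ₗ[ℂ] Z),
    Function.Injective ιZ → DenseRange ιZ →
    (∀ (a c : A) (b d : B), ιZ (a ⊗ₜ[ℂ] b) * ιZ (c ⊗ₜ[ℂ] d) = ιZ ((a * c) ⊗ₜ[ℂ] (b * d))) →
    (∀ (a : A) (b : B), star (ιZ (a ⊗ₜ[ℂ] b)) = ιZ (star a ⊗ₜ[ℂ] star b)) →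
    ∀ u : A ⊗[ℂ] B, ‖ιY u‖ ≤ ‖ιZ u‖
  iso : X ≃⋆ₐ[ℂ] Y
  iso_comm : ∀ u : A ⊗[ℂ] B, iso (ι u) = ιY u


namespace Aux
section norms
variable {M : Type*} [NonUnitalCStarAlgebra M] {N : M → ℝ}

lemma N_zero (h : IsCStarNorm N) : N 0 = 0 := by
  have := h.smul_eq 0 0
  simpa using this

lemma N_nonneg (h : IsCStarNorm N) (x : M) : 0 ≤ N x := by
  have h1 := h.add_le x ((-1 : ℂ) • x)
  rw [h.smul_eq] at h1
  simp only [neg_smul, one_smul, add_neg_cancel, N_zero h, norm_neg, norm_one] at h1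
  linarith

lemma N_le_one (h : IsCStarNorm N) (a : M) (ha : IsSelfAdjoint a) (h1 : ‖a‖ ≤ 1) : N a ≤ 1 := by
  set d : M := cfcₙ (fun t : ℝ => √(1 - t ^ 2) - 1) a with hd
  have hds : IsSelfAdjoint d := IsSelfAdjoint.cfcₙ
  have hcomm : a * d = d * a := by
    have h2 : cfcₙ (fun t : ℝ => t) a * cfcₙ (fun t : ℝ => √(1 - t ^ 2) - 1) a =
      cfcₙ (fun t : ℝ => √(1 - t ^ 2) - 1) a * cfcₙ (fun t : ℝ => t) a := cfcₙ_commute_cfcₙ _ _ a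
    rwa [cfcₙ_id' ℝ a] at h2
  have hrel : d + d + d * d = - (a * a) := by
    have e1 : a * a = cfcₙ (fun t : ℝ => t * t) a := by
      rw [cfcₙ_mul (fun t : ℝ => t) (fun t : ℝ => t) a, cfcₙ_id' ℝ a]
    rw [e1, hd, ← cfcₙ_add .., ← cfcₙ_mul .., ← cfcₙ_add .., ← cfcₙ_neg ..]
    apply cfcₙ_congr
    intro t ht
    have ht1 : |t| ≤ 1 := by
      have := NonUnitalIsometricContinuousFunctionalCalculus.norm_quasispectrum_le a ht
      exact le_trans this h1
    have h3 : 0 ≤ 1 - t ^ 2 := by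
      have := (sq_le_one_iff_abs_le_one t).2 ht1
      linarith
    have := Real.sq_sqrt h3
    simp only
    nlinarith
  have key : ∀ (s : ℂ), s * s = -1 → star s = -s → ∀ x, N (a * x + s • (x + d * x)) = N x := by
    intro s hs hs' x
    have e : star (a * x + s • (x + d * x)) * (a * x + s • (x + d * x)) = star x * x := by
      simp only [star_add, star_smul, star_mul, ha.star_eq, hds.star_eq, hs']
      have : star x * x = star x * x + star x * ((d + d + d * d + a * a) * x) := by
        rw [hrel]; simp
      rw [this]
      simp only [add_mul, mul_add, smul_mul_assoc, mul_smul_comm, smul_add, smul_smul,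
        neg_smul, neg_mul, hs, one_smul, neg_neg, smul_neg]
      have hc : star x * a * (d * x) = star x * d * (a * x) := by
        calc star x * a * (d * x) = star x * (a * d) * x := by simp only [mul_assoc]
          _ = _ := by rw [hcomm]; simp only [mul_assoc]
      rw [hc]
      simp only [mul_assoc]
      abel
    have e2 := h.star_mul_self (a * x + s • (x + d * x))
    rw [e, h.star_mul_self] at e2
    have := N_nonneg h x
    have := N_nonneg h (a * x + s • (x + d * x))
    nlinarith
  have k1 := key Complex.I (by simp) (by simp) a
  have k2 := key (-Complex.I) (by simp) (by simp) a
  have k3 := h.add_le (a * a + Complex.I • (a + d * a)) (a * a + (-Complex.I) • (a + d * a))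
  have e : (a * a + Complex.I • (a + d * a)) + (a * a + (-Complex.I) • (a + d * a))
      = (2 : ℂ) • (a * a) := by
    rw [two_smul, neg_smul]; abel
  rw [e, k1, k2, h.smul_eq] at k3
  have k4 := h.star_mul_self a
  rw [ha.star_eq] at k4
  rw [k4] at k3
  simp at k3
  by_contra hh
  push Not at hh
  nlinarith

lemma N_le (h : IsCStarNorm N) (x : M) : N x ≤ ‖x‖ := by
  have hsa : ∀ a : M, IsSelfAdjoint a → N a ≤ ‖a‖ := by
    intro a ha
    by_cases h0 : a = 0
    · subst h0; simp [N_zero h]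
    have hn : 0 < ‖a‖ := norm_pos_iff.2 h0
    have := N_le_one h (((‖a‖⁻¹ : ℝ) : ℂ) • a) (by
        rw [isSelfAdjoint_iff, star_smul, ha.star_eq]; simp) (by
        rw [norm_smul]; simp [hn.ne'])
    rw [h.smul_eq] at this
    simp at this
    rwa [inv_mul_le_iff₀ hn, mul_one] at this
  have h1 := hsa (star x * x) (IsSelfAdjoint.star_mul_self x)
  rw [h.star_mul_self, CStarRing.norm_star_mul_self] at h1
  exact abs_le_of_sq_le_sq' (by nlinarith) (norm_nonneg _) |>.2

lemma le_N (h : IsCStarNorm N) (x : M) : ‖x‖ ≤ N x := by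
  have hpos : ‖star x * x‖ ≤ N (star x * x) := by
    set a := star x * x with haa
    have ha : IsSelfAdjoint a := IsSelfAdjoint.star_mul_self x
    by_contra hlt
    push Not at hlt
    obtain ⟨r, hr1, hr2⟩ := exists_between hlt
    have hr0 : 0 < r := lt_of_le_of_lt (N_nonneg h _) hr1
    have hc1 : Continuous (fun t : ℝ => t / (max |t| r) ^ 2) :=
      continuous_id.div₀ (by fun_prop) (fun t => by positivity)
    have hc1' : ContinuousOn (fun t : ℝ => t / (max |t| r) ^ 2) (quasispectrum ℝ a) :=
      hc1.continuousOn
    have hc2' : ContinuousOn (fun t : ℝ => max (|t| - r) 0) (quasispectrum ℝ a) := by fun_prop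
    set f : M := cfcₙ (fun t : ℝ => max (|t| - r) 0) a with hf
    set g : M := cfcₙ (fun t : ℝ => t / (max |t| r) ^ 2) a with hg
    have hf00 : (fun t : ℝ => max (|t| - r) 0) 0 = 0 := by simp [hr0.le]
    have hg00 : (fun t : ℝ => t / (max |t| r) ^ 2) 0 = 0 := by simp
    have hrel : a * (g * f) = f := by
      have e1 : a * (g * f) = cfcₙ (fun t : ℝ => t * (t / (max |t| r) ^ 2 * max (|t| - r) 0)) a := by
        rw [cfcₙ_mul (fun t : ℝ => t) (fun t : ℝ => t / (max |t| r) ^ 2 * max (|t| - r) 0) a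
          (by fun_prop) (by simp) (hc1'.mul hc2') (by simp), cfcₙ_id' ℝ a,
          cfcₙ_mul (fun t : ℝ => t / (max |t| r) ^ 2) (fun t : ℝ => max (|t| - r) 0) a
          hc1' (by simp) hc2' hf00]
      rw [e1, hf]
      apply cfcₙ_congr
      intro t ht
      simp only
      rcases le_total |t| r with h3 | h3
      · rw [max_eq_right (by linarith : |t| - r ≤ 0)]; simp
      · rw [max_eq_left h3]
        have : t ≠ 0 := abs_pos.1 (by linarith)
        rw [sq_abs]
        field_simp
    have hgn : ‖g‖ ≤ r⁻¹ := by
      apply norm_cfcₙ_le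
      intro t ht
      have hm : r ≤ max |t| r := le_max_right _ _
      have hm2 : |t| ≤ max |t| r := le_max_left _ _
      have hm0 : 0 < max |t| r := lt_of_lt_of_le hr0 hm
      rw [Real.norm_eq_abs, abs_div, abs_pow, abs_of_pos hm0, div_le_iff₀ (by positivity),
        inv_mul_eq_div, le_div_iff₀ hr0]
      nlinarith [abs_nonneg t]
    have hf0 : f ≠ 0 := by
      obtain ⟨t, ht, hta⟩ :=
        (NonUnitalIsometricContinuousFunctionalCalculus.isGreatest_norm_quasispectrum (𝕜 := ℝ) a ha).1
      have h7 := norm_apply_le_norm_cfcₙ (fun t : ℝ => max (|t| - r) 0) a ht (by fun_prop) hf00 ha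
      intro h8
      rw [← hf, h8, norm_zero] at h7
      simp only [Real.norm_eq_abs] at hta h7
      rw [hta, max_eq_left (by linarith), abs_of_pos (by linarith)] at h7
      linarith
    have hNf : 0 < N f := lt_of_le_of_ne (N_nonneg h f) (fun h4 => hf0 (h.eq_zero_of _ h4.symm))
    have h5 : N f ≤ N a * (r⁻¹ * N f) := by
      calc N f = N (a * (g * f)) := by rw [hrel]
        _ ≤ N a * N (g * f) := h.mul_le _ _
        _ ≤ N a * (N g * N f) := by gcongr; exacts [N_nonneg h _, h.mul_le _ _]
        _ ≤ N a * (r⁻¹ * N f) := by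
          gcongr
          exacts [N_nonneg h _, (N_le h g).trans hgn]
    have h6 : N a * r⁻¹ < 1 := by
      rw [← div_eq_mul_inv, div_lt_one hr0]; exact hr1
    nlinarith
  rw [h.star_mul_self, CStarRing.norm_star_mul_self] at hpos
  exact abs_le_of_sq_le_sq' (by nlinarith) (N_nonneg h _) |>.2
end norms

section rows
variable {B : Type*} [NonUnitalCStarAlgebra B]

section ord
variable [PartialOrder B] [StarOrderedRing B]
open scoped InnerProductSpace WithCStarModule

lemma vec_norm {p : ℕ} (γ : Fin p → ℂ) (b : B) :
    ‖((WithCStarModule.equiv B (Fin p → B)).symm (fun k => γ k • b))‖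
      ≤ √(∑ k, ‖γ k‖ ^ 2) * ‖b‖ := by
  apply abs_le_of_sq_le_sq' _ (by positivity) |>.2
  rw [WithCStarModule.pi_norm_sq, mul_pow, Real.sq_sqrt (by positivity), Finset.sum_mul]
  refine (norm_sum_le _ _).trans (Finset.sum_le_sum fun k _ => ?_)
  simp only [WithCStarModule.equiv_symm_pi_apply, WithCStarModule.inner_def]
  rw [CStarRing.norm_self_mul_star, norm_smul]
  apply le_of_eq; ring

lemma row_bound_aux {p : ℕ} (γ β : Fin p → ℂ) (w : CStarMatrix (Fin p) (Fin p) B) :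
    ‖∑ k, ∑ l, (γ k * β l) • w k l‖ ≤ √(∑ k, ‖γ k‖ ^ 2) * ‖w‖ * √(∑ k, ‖β k‖ ^ 2) := by
  set z := ∑ k, ∑ l, (γ k * β l) • w k l with hz
  set K := √(∑ k, ‖γ k‖ ^ 2) * ‖w‖ * √(∑ k, ‖β k‖ ^ 2) with hK
  have hKn : 0 ≤ K := by positivity
  have key : ‖star z * z * star z‖ ≤ K * (‖z‖ * ‖z‖) := by
    have e : star z * z * star z =
        ⟪(WithCStarModule.equiv B (Fin p → B)).symm (fun l => (star (β l)) • z),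
          CStarMatrix.toCLM w
            ((WithCStarModule.equiv B (Fin p → B)).symm (fun k => γ k • star z))⟫_B := by
      rw [WithCStarModule.pi_inner]
      simp only [CStarMatrix.toCLM_apply_eq_sum, WithCStarModule.equiv_symm_pi_apply,
        WithCStarModule.inner_def, star_smul, star_star]
      conv_lhs => rw [mul_assoc, hz]
      rw [Finset.sum_mul, Finset.mul_sum]
      simp only [Finset.sum_mul, Finset.mul_sum]
      rw [Finset.sum_comm]
      refine Finset.sum_congr rfl fun l _ => Finset.sum_congr rfl fun k _ => ?_
      simp only [smul_mul_assoc, mul_smul_comm, smul_smul, mul_assoc]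
      rw [mul_comm]
    rw [e]
    refine (CStarModule.norm_inner_le _).trans ?_
    have h1 := vec_norm (fun l => star (β l)) z
    have h2 := vec_norm γ (star z)
    simp only [norm_star] at h1 h2
    have h3 := (CStarMatrix.toCLM w).le_opNorm
      ((WithCStarModule.equiv B (Fin p → B)).symm (fun k => γ k • star z))
    rw [← CStarMatrix.norm_def] at h3
    calc _ ≤ (√(∑ k, ‖β k‖ ^ 2) * ‖z‖) * (‖w‖ * (√(∑ k, ‖γ k‖ ^ 2) * ‖z‖)) := by
          gcongr
          exact h3.trans (by gcongr)
      _ = _ := by rw [hK]; ring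
  have h4 : ‖z‖ * ‖z‖ * (‖z‖ * ‖z‖) ≤ ‖star z * z * star z‖ * ‖z‖ := by
    rw [← CStarRing.norm_star_mul_self, ← CStarRing.norm_star_mul_self, star_mul, star_star,
      ← mul_assoc]
    exact norm_mul_le _ _
  by_cases h0 : ‖z‖ = 0
  · rw [h0]; exact hKn
  · have hp : 0 < ‖z‖ := lt_of_le_of_ne (norm_nonneg _) (Ne.symm h0)
    have h5 : ‖z‖ * ‖z‖ * (‖z‖ * ‖z‖) ≤ K * (‖z‖ * ‖z‖) * ‖z‖ :=
      h4.trans (by gcongr)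
    have h6 : ‖z‖ * (‖z‖ * ‖z‖ * ‖z‖) ≤ K * (‖z‖ * ‖z‖ * ‖z‖) := by nlinarith
    exact le_of_mul_le_mul_right h6 (by positivity)
end ord

lemma row_bound {p : ℕ} {N : Matrix (Fin p) (Fin p) B → ℝ} (hN : IsCStarNorm N)
    (γ β : Fin p → ℂ) (w : Matrix (Fin p) (Fin p) B) :
    ‖∑ k, ∑ l, (γ k * β l) • w k l‖ ≤ √(∑ k, ‖γ k‖ ^ 2) * N w * √(∑ k, ‖β k‖ ^ 2) := by
  let _ := CStarAlgebra.spectralOrder B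
  have _ := CStarAlgebra.spectralOrderedRing B
  have h1 := row_bound_aux γ β (CStarMatrix.ofMatrix w)
  have hN' : IsCStarNorm (M := CStarMatrix (Fin p) (Fin p) B) N :=
    ⟨hN.1, hN.2, hN.3, hN.4, hN.5⟩
  have h2 := le_N hN' (CStarMatrix.ofMatrix w)
  refine h1.trans ?_
  gcongr
  exact h2

lemma one_bound {N : Matrix (Fin 1) (Fin 1) B → ℝ} (hN : IsCStarNorm N) (b : B) :
    N (fun _ _ => b) ≤ ‖b‖ := by
  have h : IsCStarNorm (fun b : B => N (fun _ _ => b)) := by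
    refine ⟨fun x y => hN.add_le _ _, fun c x => hN.smul_eq _ _, fun x hx => ?_, fun x y => ?_,
      fun x => ?_⟩
    · exact congrFun (congrFun (hN.eq_zero_of _ hx) 0) 0
    · have := hN.mul_le (Matrix.of fun _ _ => x) (Matrix.of fun _ _ => y)
      have e : ((Matrix.of fun _ _ => x : Matrix (Fin 1) (Fin 1) B) * (Matrix.of fun _ _ => y))
          = Matrix.of (fun _ _ => x * y) := by
        ext i j
        simp [Matrix.mul_apply]
      rw [e] at this
      exact this
    · have := hN.star_mul_self (Matrix.of fun _ _ => x)
      have e : (star (Matrix.of fun _ _ => x : Matrix (Fin 1) (Fin 1) B) * (Matrix.of fun _ _ => x))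
          = Matrix.of (fun _ _ => star x * x) := by
        ext i j
        simp [Matrix.mul_apply, Matrix.star_apply]
      rw [e] at this
      exact this
  exact N_le h b

lemma matN_nonneg {p : ℕ} {N : Matrix (Fin p) (Fin p) B → ℝ} (h : IsCStarNorm N)
    (x : Matrix (Fin p) (Fin p) B) : 0 ≤ N x := by
  have h0 : N 0 = 0 := by simpa using h.smul_eq 0 0
  have h1 := h.add_le x ((-1 : ℂ) • x)
  rw [h.smul_eq] at h1
  simp only [neg_smul, one_smul, add_neg_cancel, h0, norm_neg, norm_one] at h1
  linarith
end rows
end Aux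


namespace Aux
section slices
variable {A B : Type u} [NonUnitalCStarAlgebra A] [NonUnitalCStarAlgebra B]

/-- slice map -/
def slice (f : A →ₗ[ℂ] ℂ) : A ⊗[ℂ] B →ₗ[ℂ] B :=
  TensorProduct.lift ((LinearMap.lsmul ℂ B).comp f)

lemma slice_tmul (f : A →ₗ[ℂ] ℂ) (a : A) (b : B) : slice f (a ⊗ₜ[ℂ] b) = f a • b := by
  simp [slice]

lemma scalar_mat_bound {p : ℕ} {N : Matrix (Fin p) (Fin p) A → ℝ} (hN : IsCStarNorm N)
    (f : A →ₗ[ℂ] ℂ) (K : ℝ) (hf : ∀ a, ‖f a‖ ≤ K * ‖a‖) (hK : 0 ≤ K)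
    (v : Matrix (Fin p) (Fin p) A) (γ : Fin p → ℂ) :
    √(∑ j, ‖∑ i, γ i * f (v i j)‖ ^ 2) ≤ K * N v * √(∑ i, ‖γ i‖ ^ 2) := by
  set y : Fin p → ℂ := fun j => ∑ i, γ i * f (v i j) with hy
  set s := √(∑ j, ‖y j‖ ^ 2) with hs
  have hs2 : s ^ 2 = ∑ j, ‖y j‖ ^ 2 := Real.sq_sqrt (by positivity)
  have h1 := row_bound hN γ (fun j => star (y j)) v
  have h2 := hf (∑ k, ∑ l, (γ k * star (y l)) • v k l)
  have e : f (∑ k, ∑ l, (γ k * star (y l)) • v k l) = ((s ^ 2 : ℝ) : ℂ) := by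
    rw [hs2]
    simp only [map_sum, map_smul, smul_eq_mul]
    rw [Finset.sum_comm]
    push_cast
    refine Finset.sum_congr rfl fun l _ => ?_
    rw [← Complex.conj_mul', hy]
    simp only [Finset.mul_sum]
    refine Finset.sum_congr rfl fun i _ => ?_
    simp only [Complex.star_def]
    ring
  rw [e, Complex.norm_real, Real.norm_eq_abs, abs_of_nonneg (by positivity)] at h2
  simp only [norm_star] at h1
  rw [← hs] at h1
  have h3 : s ^ 2 ≤ K * N v * √(∑ i, ‖γ i‖ ^ 2) * s := by
    refine h2.trans ?_
    calc _ ≤ K * (√(∑ k, ‖γ k‖ ^ 2) * N v * s) := by gcongr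
      _ = _ := by ring
  have hR : 0 ≤ K * N v * √(∑ i, ‖γ i‖ ^ 2) :=
    mul_nonneg (mul_nonneg hK (matN_nonneg hN v)) (by positivity)
  have hs0 : 0 ≤ s := by positivity
  by_contra hc
  push Not at hc
  nlinarith

variable {NA : ∀ p : ℕ, Matrix (Fin p) (Fin p) A → ℝ}
    {NB : ∀ q : ℕ, Matrix (Fin q) (Fin q) B → ℝ}

lemma slice_bound (hNA : ∀ p, IsCStarNorm (NA p)) (hNB : ∀ q, IsCStarNorm (NB q))
    (f : A →ₗ[ℂ] ℂ) (K : ℝ) (hf : ∀ a, ‖f a‖ ≤ K * ‖a‖) (hK : 0 ≤ K)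
    (u : A ⊗[ℂ] B) :
    ‖slice f u‖ ≤ K * osProjNorm NA NB u := by
  have main : ∀ r ∈ { r : ℝ | ∃ (p q : ℕ) (α : Fin p × Fin q → ℂ) (v : Matrix (Fin p) (Fin p) A)
      (w : Matrix (Fin q) (Fin q) B) (β : Fin p × Fin q → ℂ),
      u = ∑ ik : Fin p × Fin q, ∑ jl : Fin p × Fin q,
            (α ik * β jl) • (v ik.1 jl.1 ⊗ₜ[ℂ] w ik.2 jl.2) ∧
      r = Real.sqrt (∑ ik, ‖α ik‖ ^ 2) * NA p v * NB q w *
            Real.sqrt (∑ jl, ‖β jl‖ ^ 2) }, ‖slice f u‖ ≤ K * r := by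
    rintro r ⟨p, q, α, v, w, β, hu, rfl⟩
    set γ : Fin p → Fin q → ℂ := fun j k => ∑ i, α (i, k) * f (v i j) with hγ
    have e : slice f u = ∑ j, ∑ k, ∑ l, (γ j k * β (j, l)) • w k l := by
      rw [hu]
      simp only [map_sum, map_smul, slice_tmul, Fintype.sum_prod_type, hγ, Finset.sum_mul,
        Finset.sum_smul, smul_smul]
      have e1 : ∀ i : Fin p, ∀ k : Fin q, ∑ j : Fin p, ∑ l : Fin q,
          (α (i, k) * β (j, l) * f (v i j)) • w k l
          = ∑ j : Fin p, ∑ l : Fin q, (α (i, k) * f (v i j) * β (j, l)) • w k l := by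
        intro i k
        refine Finset.sum_congr rfl fun j _ => Finset.sum_congr rfl fun l _ => ?_
        congr 1; ring
      simp only [e1]
      calc _ = ∑ i : Fin p, ∑ j : Fin p, ∑ k : Fin q, ∑ l : Fin q,
            (α (i, k) * f (v i j) * β (j, l)) • w k l :=
            Finset.sum_congr rfl fun i _ => Finset.sum_comm
        _ = ∑ j : Fin p, ∑ i : Fin p, ∑ k : Fin q, ∑ l : Fin q,
            (α (i, k) * f (v i j) * β (j, l)) • w k l := Finset.sum_comm
        _ = _ := Finset.sum_congr rfl fun j _ => by
            rw [Finset.sum_comm]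
            exact Finset.sum_congr rfl fun k _ => Finset.sum_comm
    have hw := matN_nonneg (hNB q) w
    have hv := matN_nonneg (hNA p) v
    have hg : ∑ j, ∑ k, ‖γ j k‖ ^ 2 ≤ (K * NA p v) ^ 2 * ∑ ik, ‖α ik‖ ^ 2 := by
      rw [Finset.sum_comm, Fintype.sum_prod_type, Finset.sum_comm (s := Finset.univ (α := Fin p)),
        Finset.mul_sum]
      refine Finset.sum_le_sum fun k _ => ?_
      have := scalar_mat_bound (hNA p) f K hf hK v (fun i => α (i, k))
      have h2 := pow_le_pow_left₀ (by positivity) this 2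
      rw [mul_pow, Real.sq_sqrt (by positivity), Real.sq_sqrt (by positivity)] at h2
      exact h2
    rw [e]
    calc _ ≤ ∑ j, ‖∑ k, ∑ l, (γ j k * β (j, l)) • w k l‖ := norm_sum_le _ _
      _ ≤ ∑ j, √(∑ k, ‖γ j k‖ ^ 2) * NB q w * √(∑ l, ‖β (j, l)‖ ^ 2) :=
        Finset.sum_le_sum fun j _ => row_bound (hNB q) _ _ w
      _ = NB q w * ∑ j, √(∑ k, ‖γ j k‖ ^ 2) * √(∑ l, ‖β (j, l)‖ ^ 2) := by
        rw [Finset.mul_sum]; exact Finset.sum_congr rfl fun j _ => by ring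
      _ ≤ NB q w * (√(∑ j, ∑ k, ‖γ j k‖ ^ 2) * √(∑ j, ∑ l, ‖β (j, l)‖ ^ 2)) := by
        gcongr
        exact Real.sum_sqrt_mul_sqrt_le _ (fun j => by positivity) (fun j => by positivity)
      _ ≤ NB q w * ((K * NA p v * √(∑ ik, ‖α ik‖ ^ 2)) * √(∑ jl, ‖β jl‖ ^ 2)) := by
        rw [Fintype.sum_prod_type (fun jl => ‖β jl‖ ^ 2)]
        gcongr
        apply Real.sqrt_le_iff.2 ⟨by positivity, ?_⟩
        rw [mul_pow, Real.sq_sqrt (by positivity)]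
        exact hg
      _ = _ := by ring
  rcases hK.eq_or_lt with h0 | h0
  · have : f = 0 := by
      ext a
      have := hf a
      rw [← h0, zero_mul] at this
      simpa using this
    rw [← h0, this]
    have : slice (0 : A →ₗ[ℂ] ℂ) u = 0 := by
      have : slice (B := B) (0 : A →ₗ[ℂ] ℂ) = 0 := TensorProduct.ext' fun a b => by simp [slice_tmul]
      rw [this]; rfl
    rw [this]; simp
  · rw [← div_le_iff₀' h0]
    apply le_csInf
    · obtain ⟨n, a, b, hab⟩ : ∃ (n : ℕ) (a : Fin n → A) (b : Fin n → B),
          u = ∑ i, a i ⊗ₜ[ℂ] b i := by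
        obtain ⟨S, hS⟩ := TensorProduct.exists_finset u
        refine ⟨S.card, fun i => (S.equivFin.symm i).1.1, fun i => (S.equivFin.symm i).1.2, ?_⟩
        rw [hS, ← Finset.sum_coe_sort]
        exact (Equiv.sum_comp S.equivFin.symm (fun s => s.1.1 ⊗ₜ[ℂ] s.1.2)).symm
      refine ⟨_, n, n, fun ik => if ik.1 = ik.2 then 1 else 0, Matrix.diagonal a,
        Matrix.diagonal b, fun ik => if ik.1 = ik.2 then 1 else 0, ?_, rfl⟩
      rw [hab]
      simp only [Fintype.sum_prod_type, ite_mul, mul_ite, mul_one, mul_zero, zero_mul, one_mul,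
        ite_smul, zero_smul, one_smul, Finset.sum_ite_eq, Finset.mem_univ, if_true]
      refine Finset.sum_congr rfl fun i _ => ?_
      rw [Finset.sum_eq_single i]
      · rw [Finset.sum_eq_single i]
        · simp
        · intro j _ hj
          simp [Matrix.diagonal_apply_ne _ hj.symm]
        · simp
      · intro j _ hj
        simp [hj.symm]
      · simp
    · intro r hr
      rw [div_le_iff₀' h0]
      exact main r hr

lemma osProjNorm_tmul_le (hNA : ∀ p, IsCStarNorm (NA p)) (hNB : ∀ q, IsCStarNorm (NB q))
    (a : A) (b : B) : osProjNorm NA NB (a ⊗ₜ[ℂ] b) ≤ ‖a‖ * ‖b‖ := by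
  have h1 : NA 1 (fun _ _ => a) * NB 1 (fun _ _ => b) ≤ ‖a‖ * ‖b‖ :=
    mul_le_mul (one_bound (hNA 1) a) (one_bound (hNB 1) b) (matN_nonneg (hNB 1) _) (norm_nonneg _)
  refine le_trans (csInf_le ⟨0, ?_⟩ ⟨1, 1, fun _ => 1, fun _ _ => a, fun _ _ => b, fun _ => 1,
    ?_, rfl⟩) ?_
  · rintro r ⟨p, q, α, v, w, β, -, rfl⟩
    exact mul_nonneg (mul_nonneg (mul_nonneg (by positivity) (matN_nonneg (hNA p) _))
      (matN_nonneg (hNB q) _)) (by positivity)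
  · simp [Fintype.sum_prod_type]
  · simpa [Fintype.sum_prod_type] using h1
end slices
end Aux

namespace Aux
section states
open scoped ComplexOrder

lemma exists_state {M : Type u} [CStarAlgebra M] [PartialOrder M] [StarOrderedRing M]
    [Nontrivial M] (a : M) (ha : 0 ≤ a) : ∃ f : M →ₚ[ℂ] ℂ, f 1 = 1 ∧ f a = ‖a‖ := by
  have hn : ‖1 + a‖ = 1 + ‖a‖ := by
    apply le_antisymm
    · exact (norm_add_le _ _).trans (by simp)
    · have h1 := CStarAlgebra.norm_mem_spectrum_of_nonneg (a := a) ha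
      have h2 : (1 + ‖a‖ : ℝ) ∈ spectrum ℝ (1 + a) := by
        have := (spectrum.add_mem_add_iff (a := a) (r := ‖a‖) (s := (1:ℝ))).2 h1
        simpa [add_comm] using this
      have := spectrum.norm_le_norm_of_mem h2
      rwa [Real.norm_of_nonneg (by positivity)] at this
  have h0 : (1 + a) ≠ 0 := by
    rw [← norm_ne_zero_iff, hn]; positivity
  obtain ⟨g, hg, hg1⟩ := exists_dual_vector ℂ (1 + a) (norm_ne_zero_iff.2 h0)
  have hb : ∀ x, ‖g x‖ ≤ ‖x‖ := fun x => by simpa [hg] using g.le_opNorm x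
  rw [map_add, hn] at hg1
  have hre : (g 1).re + (g a).re = 1 + ‖a‖ := by
    have := congrArg Complex.re hg1
    simpa using this
  have hb1 := hb 1
  have hba := hb a
  rw [norm_one] at hb1
  have r1 := Complex.re_le_norm (g 1)
  have ra := Complex.re_le_norm (g a)
  have aux : ∀ (z : ℂ) (r : ℝ), z.re = r → ‖z‖ ≤ r → z = r := by
    intro z r h1 h2
    have h3 : ‖z‖ = z.re := le_antisymm (h1 ▸ h2) (Complex.re_le_norm z)
    have h4 := Complex.sq_norm z
    rw [Complex.normSq_apply, h3] at h4
    apply Complex.ext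
    · simpa using h1
    · simp; nlinarith
  have e1 : g 1 = 1 := by
    have := aux (g 1) 1 (by linarith) hb1
    simpa using this
  have ea : g a = ‖a‖ := aux (g a) ‖a‖ (by linarith) hba
  have him : ∀ h : M, IsSelfAdjoint h → (g h).im = 0 := by
    intro h hh
    have key : ∀ t : ℝ, ((g h).im + t) ^ 2 ≤ ‖h‖ ^ 2 + t ^ 2 := by
      intro t
      have h1 := hb (h + (t * Complex.I : ℂ) • (1 : M))
      have h2 : ‖h + (t * Complex.I : ℂ) • (1 : M)‖ ^ 2 ≤ ‖h‖ ^ 2 + t ^ 2 := by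
        rw [sq, ← CStarRing.norm_star_mul_self]
        have : star (h + (t * Complex.I : ℂ) • (1 : M)) * (h + (t * Complex.I : ℂ) • (1 : M))
            = h * h + ((t ^ 2 : ℝ) : ℂ) • (1 : M) := by
          simp only [star_add, star_smul, hh.star_eq, star_one, add_mul, mul_add, smul_mul_assoc,
            mul_smul_comm, one_mul, mul_one]
          simp only [star_mul', Complex.star_def, Complex.conj_ofReal, Complex.conj_I]
          have : (↑t * -Complex.I) * (↑t * Complex.I) = ((t ^ 2 : ℝ) : ℂ) := by
            push_cast; linear_combination (-(t:ℂ)^2) * Complex.I_mul_I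
          rw [smul_add, smul_smul, mul_comm (↑t * Complex.I), this]
          simp only [mul_neg, neg_smul]
          abel
        rw [this]
        refine (norm_add_le _ _).trans ?_
        gcongr
        · rw [sq]; exact norm_mul_le _ _
        · rw [norm_smul]; simp
      have h3 : ((g h).im + t) ≤ ‖g (h + (t * Complex.I : ℂ) • (1 : M))‖ ∧
         -((g h).im + t) ≤ ‖g (h + (t * Complex.I : ℂ) • (1 : M))‖ := by
        have := abs_le.1 (Complex.abs_im_le_norm (g (h + (t * Complex.I : ℂ) • (1 : M))))
        simp only [map_add, map_smul, e1] at this ⊢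
        simp at this ⊢
        constructor <;> linarith
      have := abs_le.2 ⟨by linarith [h3.2], h3.1⟩
      rw [← sq_abs]
      refine le_trans ?_ h2
      gcongr
      exact this.trans h1
    by_contra hne
    have := key (‖h‖ ^ 2 / (g h).im)
    have e : ((g h).im + ‖h‖ ^ 2 / (g h).im) ^ 2
      = (g h).im ^ 2 + 2 * ‖h‖ ^ 2 + (‖h‖ ^ 2 / (g h).im) ^ 2 := by field_simp; ring
    rw [e] at this
    have : 0 < (g h).im ^ 2 := by positivity
    nlinarith [sq_nonneg ‖h‖]
  refine ⟨PositiveLinearMap.mk₀ g.toLinearMap ?_, e1, ea⟩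
  intro x hx
  have hx' := IsSelfAdjoint.of_nonneg hx
  rw [Complex.nonneg_iff]
  refine ⟨?_, (him x hx').symm⟩
  have h1 : ‖algebraMap ℝ M ‖x‖ - x‖ ≤ ‖x‖ := by
    have hle : x ≤ algebraMap ℝ M ‖x‖ := IsSelfAdjoint.le_algebraMap_norm_self hx'
    rw [CStarAlgebra.norm_le_iff_le_algebraMap _ (norm_nonneg _) (sub_nonneg.2 hle)]
    exact sub_le_self _ hx
  have h2 := (Complex.re_le_norm _).trans ((hb _).trans h1)
  rw [map_sub, Algebra.algebraMap_eq_smul_one, ← Complex.coe_smul, map_smul, e1] at h2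
  simp at h2
  exact h2

lemma exists_state' {Y : Type u} [NonUnitalCStarAlgebra Y] [PartialOrder Y] [StarOrderedRing Y]
    (a : Y) (ha : 0 ≤ a) : ∃ f : Y →ₚ[ℂ] ℂ, f a = ‖a‖ := by
  obtain ⟨f, -, hf⟩ := exists_state (M := Unitization ℂ Y) (a : Unitization ℂ Y)
    (Unitization.inr_nonneg_iff.2 ha)
  refine ⟨PositiveLinearMap.mk₀ (f.toLinearMap.comp (Unitization.inrHom ℂ ℂ Y)) ?_, ?_⟩
  · intro x hx
    exact map_nonneg f (Unitization.inr_nonneg_iff.2 hx)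
  · rw [Unitization.norm_inr] at hf; exact hf
end states
end Aux

namespace Aux
section gn
open scoped ComplexOrder
variable {M : Type u} [NonUnitalNormedRing M] [NormedSpace ℂ M] {I : Type u} (H : I → Type u)
  [∀ i, NormedAddCommGroup (H i)] [∀ i, InnerProductSpace ℂ (H i)]
  (ρ : ∀ i, M →ₙₐ[ℂ] (H i →L[ℂ] H i))

lemma block_le (hρ : ∀ i a, ‖ρ i a‖ ≤ ‖a‖) (a : M) (x : lp H 2) (i : I) :
    ‖ρ i a (x i)‖ ≤ ‖((‖a‖ : ℂ) • x) i‖ := by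
  refine ((ρ i a).le_opNorm _).trans ?_
  rw [lp.coeFn_smul, Pi.smul_apply, norm_smul]
  simp only [Complex.norm_real, norm_norm]
  gcongr
  exact hρ i a

/-- block diagonal operators -/
def blockFun (hρ : ∀ i a, ‖ρ i a‖ ≤ ‖a‖) (a : M) : lp H 2 →L[ℂ] lp H 2 :=
  LinearMap.mkContinuous
    { toFun := fun x => ⟨fun i => ρ i a (x i),
        Memℓp.mono' (lp.memℓp ((‖a‖ : ℂ) • x)) (block_le H ρ hρ a x)⟩
      map_add' := fun x y => by ext i; simp; rfl
      map_smul' := fun c x => by ext i; simp }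
    ‖a‖ (fun x => by
      have := lp.norm_mono (p := 2) (by simp)
        (x := (⟨fun i => ρ i a (x i),
        Memℓp.mono' (lp.memℓp ((‖a‖ : ℂ) • x)) (block_le H ρ hρ a x)⟩ : lp H 2))
        (y := ((‖a‖ : ℂ) • x)) (block_le H ρ hρ a x)
      rw [norm_smul] at this
      simpa using this)

/-- block diagonal representation -/
def block (hρ : ∀ i a, ‖ρ i a‖ ≤ ‖a‖) : M →ₙₐ[ℂ] (lp H 2 →L[ℂ] lp H 2) where
  toFun := blockFun H ρ hρ
  map_add' a b := by ext x i; simp [blockFun]; rfl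
  map_zero' := by ext x i; simp [blockFun]
  map_smul' c a := by ext x i; simp [blockFun]
  map_mul' a b := by ext x i; simp [blockFun]

lemma block_norm_le (hρ : ∀ i a, ‖ρ i a‖ ≤ ‖a‖) (a : M) : ‖block H ρ hρ a‖ ≤ ‖a‖ := by
  refine ContinuousLinearMap.opNorm_le_bound _ (norm_nonneg _) fun x => ?_
  have := lp.norm_mono (p := 2) (by simp) (x := block H ρ hρ a x)
        (y := ((‖a‖ : ℂ) • x)) (block_le H ρ hρ a x)
  rw [norm_smul] at this
  simpa using this

lemma le_block_norm (hρ : ∀ i a, ‖ρ i a‖ ≤ ‖a‖) (a : M) (i : I) (v : H i) :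
    ‖ρ i a v‖ ≤ ‖block H ρ hρ a‖ * ‖v‖ := by
  classical
  have h1 := (block H ρ hρ a).le_opNorm (lp.single 2 i v)
  rw [lp.norm_single (by simp)] at h1
  refine le_trans ?_ h1
  have h2 := lp.norm_apply_le_norm (p := 2) (by simp) (block H ρ hρ a (lp.single 2 i v)) i
  refine le_trans (le_of_eq ?_) h2
  have : (block H ρ hρ a (lp.single 2 i v)) i = ρ i a ((lp.single 2 i v : lp H 2) i) := rfl
  rw [this, lp.single_apply_self]

theorem exists_gn (Y : Type u) [NonUnitalCStarAlgebra Y] :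
    ∃ (K : Type u) (_ : NormedAddCommGroup K) (_ : InnerProductSpace ℂ K) (_ : CompleteSpace K)
      (ρ : Y →ₙₐ[ℂ] (K →L[ℂ] K)), ∀ y, ‖ρ y‖ = ‖y‖ := by
  let _ := CStarAlgebra.spectralOrder Y
  have _ := CStarAlgebra.spectralOrderedRing Y
  have hs : ∀ x : Y, ∃ f : Unitization ℂ Y →ₚ[ℂ] ℂ,
      f 1 = 1 ∧ f (star (x : Unitization ℂ Y) * x) = ‖star (x : Unitization ℂ Y) * x‖ := fun x =>
    exists_state _ (star_mul_self_nonneg _)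
  choose f hf1 hf2 using hs
  let ρ : ∀ x : Y, Y →ₙₐ[ℂ] ((f x).GNS →L[ℂ] (f x).GNS) := fun x =>
    ((f x).gnsNonUnitalStarAlgHom.comp (Unitization.inrNonUnitalStarAlgHom ℂ Y)).toNonUnitalAlgHom
  have hρa : ∀ i a, ρ i a = (f i).gnsNonUnitalStarAlgHom (a : Unitization ℂ Y) := fun _ _ => rfl
  have hρ : ∀ i a, ‖ρ i a‖ ≤ ‖a‖ := by
    intro i a
    rw [hρa, ← Unitization.norm_inr (𝕜 := ℂ) (a := a)]
    exact NonUnitalStarAlgHom.norm_apply_le (f i).gnsNonUnitalStarAlgHom (a : Unitization ℂ Y)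
  refine ⟨lp (fun x => (f x).GNS) 2, inferInstance, inferInstance, inferInstance,
    block _ ρ hρ, fun y => le_antisymm (block_norm_le _ ρ hρ y) ?_⟩
  have h1 := le_block_norm _ ρ hρ y y ((f y).toPreGNS 1 : (f y).GNS)
  rw [hρa, PositiveLinearMap.gnsNonUnitalStarAlgHom_apply_coe, UniformSpace.Completion.norm_coe,
    UniformSpace.Completion.norm_coe] at h1
  have e1 : ‖(f y).toPreGNS 1‖ = 1 := by
    rw [PositiveLinearMap.preGNS_norm_def]
    simp [hf1]
  have e2 : ‖(f y).leftMulMapPreGNS (y : Unitization ℂ Y) ((f y).toPreGNS 1)‖ = ‖y‖ := by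
    rw [PositiveLinearMap.preGNS_norm_def]
    simp only [PositiveLinearMap.leftMulMapPreGNS_apply, PositiveLinearMap.ofPreGNS_toPreGNS,
      mul_one]
    rw [hf2, CStarRing.norm_star_mul_self, Unitization.norm_inr]
    simp
  rw [e1, e2, mul_one] at h1
  exact h1
end gn
end Aux

namespace Aux
section fdrep
open scoped ComplexOrder

lemma exists_faithful (A : Type u) [NonUnitalCStarAlgebra A] [PartialOrder A] [StarOrderedRing A]
    [FiniteDimensional ℂ A] : ∃ F : A →ₚ[ℂ] ℂ, ∀ x, F (star x * x) = 0 → x = 0 := by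
  classical
  have hs : ∀ x : A, ∃ f : A →ₚ[ℂ] ℂ, f (star x * x) = ‖star x * x‖ := fun x =>
    exists_state' _ (star_mul_self_nonneg _)
  choose f hf using hs
  have _ : ProperSpace A := FiniteDimensional.proper ℂ A
  have hcont : ∀ x, Continuous (fun y => f x (star y * y)) := fun x =>
    ((f x).toLinearMap.continuous_of_finiteDimensional).comp (by fun_prop)
  obtain ⟨t, -, ht⟩ := (isCompact_sphere (0 : A) 1).elim_nhds_subcover
    (fun x => {y | f x (star y * y) ≠ 0}) (by
      intro x hx
      refine (isOpen_ne_fun (hcont x) continuous_const).mem_nhds ?_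
      show f x (star x * x) ≠ 0
      rw [hf, CStarRing.norm_star_mul_self]
      simp only [mem_sphere_zero_iff_norm] at hx
      simp [hx])
  have hpos : ∀ x y, 0 ≤ f x (star y * y) := fun x y => map_nonneg (f x) (star_mul_self_nonneg y)
  refine ⟨PositiveLinearMap.mk₀ (∑ x ∈ t, (f x).toLinearMap) ?_, ?_⟩
  · intro a ha
    rw [LinearMap.sum_apply]
    exact Finset.sum_nonneg fun x _ => map_nonneg (f x) ha
  · intro y hy
    have hy' : ∑ x ∈ t, f x (star y * y) = 0 := by
      rw [← hy]
      exact (LinearMap.sum_apply t (fun x => (f x).toLinearMap) (star y * y)).symm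
    rw [Finset.sum_eq_zero_iff_of_nonneg (fun x _ => hpos x y)] at hy'
    by_contra h0
    have hn : 0 < ‖y‖ := norm_pos_iff.2 h0
    have hz : ((‖y‖⁻¹ : ℝ) : ℂ) • y ∈ Metric.sphere (0 : A) 1 := by
      rw [mem_sphere_zero_iff_norm, norm_smul]; simp [hn.ne']
    have := ht hz
    simp only [Set.mem_iUnion] at this
    obtain ⟨x, hx, h3⟩ := this
    apply h3
    simp [smul_mul_assoc, mul_smul_comm, hy' x hx]

theorem exists_fdrep (A : Type u) [NonUnitalCStarAlgebra A] [FiniteDimensional ℂ A] :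
    ∃ (n : ℕ) (π : A →⋆ₙₐ[ℂ] Matrix (Fin n) (Fin n) ℂ), Function.Injective π := by
  let _ := CStarAlgebra.spectralOrder A
  have _ := CStarAlgebra.spectralOrderedRing A
  obtain ⟨F, hF⟩ := exists_faithful A
  let j : A →ₗ[ℂ] F.GNS := (UniformSpace.Completion.toComplL (𝕜 := ℂ) (E := F.PreGNS)).toLinearMap.comp
    F.toPreGNS.toLinearMap
  have hj : LinearMap.range j = ⊤ := by
    have hc : IsClosed (LinearMap.range j : Set F.GNS) := Submodule.closed_of_finiteDimensional _
    have hd : Dense (LinearMap.range j : Set F.GNS) := by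
      have := UniformSpace.Completion.denseRange_coe (α := F.PreGNS)
      refine this.mono ?_
      rintro _ ⟨x, rfl⟩
      exact ⟨F.ofPreGNS x, rfl⟩
    apply SetLike.coe_injective
    rw [← hc.closure_eq, hd.closure_eq]; rfl
  have _ : FiniteDimensional ℂ F.GNS :=
    Module.Finite.of_surjective j (LinearMap.range_eq_top.1 hj)
  let b := stdOrthonormalBasis ℂ F.GNS
  let T := LinearMap.toMatrixOrthonormal b
  refine ⟨Module.finrank ℂ F.GNS,
    { toFun := fun a => T (F.gnsNonUnitalStarAlgHom a).toLinearMap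
      map_add' := fun x y => Eq.trans (congrArg T (by rw [map_add]; rfl)) (map_add T _ _)
      map_zero' := Eq.trans (congrArg T (by rw [map_zero]; rfl)) (map_zero T)
      map_smul' := fun c x => Eq.trans (congrArg T (by rw [map_smul]; rfl)) (map_smul T c _)
      map_mul' := fun x y => Eq.trans (congrArg T (by rw [map_mul]; rfl)) (map_mul T _ _)
      map_star' := fun x => Eq.trans (congrArg T (by
        rw [map_star, ContinuousLinearMap.star_eq_adjoint, LinearMap.star_eq_adjoint]
        rfl)) (map_star T _) }, ?_⟩
  intro x y hxy
  have h1 : (F.gnsNonUnitalStarAlgHom x).toLinearMap = (F.gnsNonUnitalStarAlgHom y).toLinearMap :=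
    T.injective hxy
  have h2 : ∀ z : A, F.gnsNonUnitalStarAlgHom x (F.toPreGNS z) = F.gnsNonUnitalStarAlgHom y (F.toPreGNS z) :=
    fun z => congrArg (fun l => l ((F.toPreGNS z : F.PreGNS) : F.GNS)) h1
  have h3 : ∀ z : A, x * z = y * z := by
    intro z
    have := h2 z
    rw [PositiveLinearMap.gnsNonUnitalStarAlgHom_apply_coe,
      PositiveLinearMap.gnsNonUnitalStarAlgHom_apply_coe] at this
    have h4 : ‖F.leftMulMapPreGNS x (F.toPreGNS z) - F.leftMulMapPreGNS y (F.toPreGNS z)‖ = 0 := by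
      rw [← UniformSpace.Completion.norm_coe, UniformSpace.Completion.coe_sub, this, sub_self,
        norm_zero]
    have h5 := PositiveLinearMap.preGNS_norm_sq F
      (F.leftMulMapPreGNS x (F.toPreGNS z) - F.leftMulMapPreGNS y (F.toPreGNS z))
    rw [h4] at h5
    have h6 := hF (x * z - y * z) (Eq.trans (show _ = _ from h5.symm) (by simp))
    exact sub_eq_zero.1 h6
  rw [← sub_eq_zero, ← CStarRing.mul_star_self_eq_zero_iff, sub_mul, h3, sub_self]
end fdrep
end Aux

namespace Aux
section key
open scoped ComplexOrder

theorem exists_model (A B : Type u) [NonUnitalCStarAlgebra A] [NonUnitalCStarAlgebra B]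
    [FiniteDimensional ℂ A] :
    ∃ (Y : Type u) (_ : NonUnitalCStarAlgebra Y) (θ : A ⊗[ℂ] B ≃ₗ[ℂ] Y),
      (∀ (a c : A) (b d : B),
        θ (a ⊗ₜ[ℂ] b) * θ (c ⊗ₜ[ℂ] d) = θ ((a * c) ⊗ₜ[ℂ] (b * d))) ∧
      (∀ (a : A) (b : B), star (θ (a ⊗ₜ[ℂ] b)) = θ (star a ⊗ₜ[ℂ] star b)) ∧
      (∃ C : ℝ, ∀ (NA : ∀ p : ℕ, Matrix (Fin p) (Fin p) A → ℝ)
        (NB : ∀ q : ℕ, Matrix (Fin q) (Fin q) B → ℝ)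
        (_ : ∀ p, IsCStarNorm (NA p)) (_ : ∀ q, IsCStarNorm (NB q)) (u : A ⊗[ℂ] B)
        (_ : 0 ≤ osProjNorm NA NB u),
        ‖θ u‖ ≤ C * osProjNorm NA NB u) ∧
      (∃ D : ℝ, 0 < D ∧ ∀ (X : Type u) [NormedAddCommGroup X] [NormedSpace ℂ X]
        (ι : A ⊗[ℂ] B →ₗ[ℂ] X) (_ : ∀ a b, ‖ι (a ⊗ₜ[ℂ] b)‖ ≤ ‖a‖ * ‖b‖) (u : A ⊗[ℂ] B),
        ‖ι u‖ ≤ D * ‖θ u‖) := by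
  classical
  obtain ⟨n, π, hπ⟩ := exists_fdrep A
  let _ := CStarAlgebra.spectralOrder B
  have _ := CStarAlgebra.spectralOrderedRing B
  let π' : Fin n → Fin n → A →ₗ[ℂ] ℂ := fun i j =>
    { toFun := fun a => π a i j
      map_add' := fun a b => by simp
      map_smul' := fun c a => by simp }
  have hπ' : ∀ i j a, π' i j a = π a i j := fun _ _ _ => rfl
  let πl : A →ₗ[ℂ] Matrix (Fin n) (Fin n) ℂ :=
    { toFun := fun a => π a
      map_add' := fun a b => by simp
      map_smul' := fun c a => by simp }
  obtain ⟨ψ, hψ⟩ := LinearMap.exists_leftInverse_of_injective πl (LinearMap.ker_eq_bot.2 hπ)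
  have hψ' : ∀ a, ψ (π a) = a := fun a => congrArg (fun l => l a) hψ
  let Θ : A ⊗[ℂ] B →ₗ[ℂ] CStarMatrix (Fin n) (Fin n) B :=
    { toFun := fun u => CStarMatrix.ofMatrix (fun i j => slice (π' i j) u)
      map_add' := fun u v => by ext i j; simp; rfl
      map_smul' := fun c u => by ext i j; simp; rfl }
  have hΘ : ∀ u i j, Θ u i j = slice (π' i j) u := fun _ _ _ => rfl
  have hΘt : ∀ a b i j, Θ (a ⊗ₜ[ℂ] b) i j = π a i j • b := fun a b i j => by
    rw [hΘ, slice_tmul, hπ']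
  let E : Fin n → Fin n → A := fun i j => ψ (Matrix.single i j 1)
  let Ψ : CStarMatrix (Fin n) (Fin n) B →ₗ[ℂ] A ⊗[ℂ] B :=
    { toFun := fun m => ∑ i, ∑ j, E i j ⊗ₜ[ℂ] m i j
      map_add' := fun u v => by simp [TensorProduct.tmul_add, Finset.sum_add_distrib]
      map_smul' := fun c u => by simp [Finset.smul_sum] }
  have hΨ : ∀ m, Ψ m = ∑ i, ∑ j, E i j ⊗ₜ[ℂ] m i j := fun _ => rfl
  have hΨΘ : ∀ u, Ψ (Θ u) = u := by
    intro u
    have : Ψ.comp Θ = LinearMap.id := by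
      refine TensorProduct.ext' fun a b => ?_
      simp only [LinearMap.comp_apply, hΨ, hΘt, LinearMap.id_apply]
      simp only [TensorProduct.tmul_smul, TensorProduct.smul_tmul', ← TensorProduct.sum_tmul]
      congr 1
      have h1 := hψ' a
      conv_rhs => rw [← h1, Matrix.matrix_eq_sum_single (π a)]
      simp only [map_sum]
      refine Finset.sum_congr rfl fun i _ => Finset.sum_congr rfl fun j _ => ?_
      rw [← map_smul, Matrix.smul_single, smul_eq_mul, mul_one]
    exact congrArg (fun l => l u) this
  have hmul : ∀ (a c : A) (b d : B),
      Θ (a ⊗ₜ[ℂ] b) * Θ (c ⊗ₜ[ℂ] d) = Θ ((a * c) ⊗ₜ[ℂ] (b * d)) := by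
    intro a c b d
    ext i j
    rw [CStarMatrix.mul_apply, hΘt, map_mul, Matrix.mul_apply, Finset.sum_smul]
    refine Finset.sum_congr rfl fun k _ => ?_
    rw [hΘt, hΘt, smul_mul_smul_comm]
  have hstar : ∀ (a : A) (b : B), star (Θ (a ⊗ₜ[ℂ] b)) = Θ (star a ⊗ₜ[ℂ] star b) := by
    intro a b
    ext i j
    rw [CStarMatrix.star_apply, hΘt, hΘt, star_smul, map_star, Matrix.star_apply]
  let S : NonUnitalStarSubalgebra ℂ (CStarMatrix (Fin n) (Fin n) B) :=
    { carrier := Set.range Θ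
      add_mem' := by
        rintro _ _ ⟨u, rfl⟩ ⟨v, rfl⟩; exact ⟨u + v, map_add _ _ _⟩
      zero_mem' := ⟨0, map_zero _⟩
      smul_mem' := by
        rintro c _ ⟨u, rfl⟩; exact ⟨c • u, map_smul _ _ _⟩
      mul_mem' := by
        rintro _ _ ⟨u, rfl⟩ ⟨v, rfl⟩
        change Θ u * Θ v ∈ LinearMap.range Θ
        induction u using TensorProduct.induction_on with
        | zero => rw [map_zero, zero_mul]; exact zero_mem _
        | add u u' hu hu' => rw [map_add, add_mul]; exact add_mem hu hu'
        | tmul a b =>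
          induction v using TensorProduct.induction_on with
          | zero => rw [map_zero, mul_zero]; exact zero_mem _
          | add u u' hu hu' => rw [map_add, mul_add]; exact add_mem hu hu'
          | tmul c d => exact ⟨_, (hmul a c b d).symm⟩
      star_mem' := by
        rintro _ ⟨u, rfl⟩
        change star (Θ u) ∈ LinearMap.range Θ
        induction u using TensorProduct.induction_on with
        | zero => rw [map_zero, star_zero]; exact zero_mem _
        | add u u' hu hu' => rw [map_add, star_add]; exact add_mem hu hu'
        | tmul a b => exact ⟨_, (hstar a b).symm⟩ }
  have hent : ∀ i j, Continuous (fun m : CStarMatrix (Fin n) (Fin n) B => m i j) := fun i j =>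
    (continuous_apply j).comp (continuous_apply i)
  have hScl : IsClosed (S : Set (CStarMatrix (Fin n) (Fin n) B)) := by
    have h1 : (S : Set (CStarMatrix (Fin n) (Fin n) B)) = {m | Θ (Ψ m) = m} := by
      ext m
      constructor
      · rintro ⟨u, rfl⟩
        show Θ (Ψ (Θ u)) = Θ u
        rw [hΨΘ]
      · intro h; exact ⟨_, h⟩
    rw [h1]
    refine isClosed_eq ?_ continuous_id
    have h2 : ∀ m, Θ (Ψ m) = CStarMatrix.ofMatrix
        (fun i j => ∑ k, ∑ l, π (E k l) i j • m k l) := by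
      intro m
      ext i j
      rw [hΨ, hΘ]
      simp only [map_sum, slice_tmul, hπ']
      rfl
    simp only [h2]
    refine continuous_pi fun i => continuous_pi fun j => ?_
    change Continuous (fun m : CStarMatrix (Fin n) (Fin n) B => ∑ k, ∑ l, π (E k l) i j • m k l)
    exact continuous_finsetSum _ fun k _ => continuous_finsetSum _ fun l _ =>
      (hent k l).const_smul _
  let θ : A ⊗[ℂ] B ≃ₗ[ℂ] S :=
    { toFun := fun u => ⟨Θ u, ⟨u, rfl⟩⟩
      map_add' := fun u v => Subtype.ext (map_add Θ u v)
      map_smul' := fun c v => Subtype.ext (map_smul Θ c v)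
      invFun := fun m => Ψ m.1
      left_inv := fun u => hΨΘ u
      right_inv := by
        rintro ⟨_, ⟨u, rfl⟩⟩
        exact Subtype.ext (congrArg Θ (hΨΘ u)) }
  have hθ : ∀ u, ((θ u : S) : CStarMatrix (Fin n) (Fin n) B) = Θ u := fun _ => rfl
  refine ⟨S, NonUnitalStarSubalgebra.nonUnitalCStarAlgebra S, θ,
    fun a c b d => Subtype.ext (hmul a c b d), fun a b => Subtype.ext (hstar a b), ?_, ?_⟩
  · let L : (Fin n → Fin n → B) →L[ℂ] CStarMatrix (Fin n) (Fin n) B :=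
      { toFun := fun m => CStarMatrix.ofMatrix m
        map_add' := fun _ _ => rfl
        map_smul' := fun _ _ => rfl
        cont := continuous_id }
    let K : Fin n → Fin n → ℝ := fun i j => ‖LinearMap.toContinuousLinearMap (π' i j)‖
    have hK0 : ∀ i j, 0 ≤ K i j := fun i j => norm_nonneg _
    have hK : ∀ i j a, ‖π' i j a‖ ≤ K i j * ‖a‖ := fun i j a =>
      (LinearMap.toContinuousLinearMap (π' i j)).le_opNorm a
    refine ⟨‖L‖ * ∑ i, ∑ j, K i j, fun NA NB hNA hNB u h0 => ?_⟩
    have h1 : ‖Θ u‖ ≤ ‖L‖ * ‖fun i j => slice (π' i j) u‖ :=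
      L.le_opNorm (fun i j => slice (π' i j) u)
    refine le_trans (show ‖θ u‖ ≤ _ from h1) ?_
    rw [mul_assoc]
    have hnn : 0 ≤ ∑ i, ∑ j, K i j := Finset.sum_nonneg fun i _ => Finset.sum_nonneg fun j _ => hK0 i j
    gcongr
    rw [pi_norm_le_iff_of_nonneg (by positivity)]
    intro i
    rw [pi_norm_le_iff_of_nonneg (by positivity)]
    intro j
    refine (slice_bound hNA hNB (π' i j) (K i j) (hK i j) (hK0 i j) u).trans ?_
    gcongr
    refine le_trans ?_ (Finset.single_le_sum (f := fun i => ∑ j, K i j)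
      (fun i _ => Finset.sum_nonneg fun j _ => hK0 i j) (Finset.mem_univ i))
    exact Finset.single_le_sum (f := fun j => K i j) (fun j _ => hK0 i j) (Finset.mem_univ j)
  · refine ⟨∑ i, ∑ j, ‖E i j‖ + 1, by positivity, fun X _ _ ι hι u => ?_⟩
    have h1 : ‖ι (Ψ (Θ u))‖ ≤ (∑ i, ∑ j, ‖E i j‖) * ‖Θ u‖ := by
      rw [hΨ, Finset.sum_mul]
      simp only [map_sum, Finset.sum_mul]
      refine (norm_sum_le _ _).trans (Finset.sum_le_sum fun i _ => ?_)
      refine (norm_sum_le _ _).trans (Finset.sum_le_sum fun j _ => ?_)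
      refine (hι _ _).trans ?_
      gcongr
      exact CStarMatrix.norm_entry_le_norm
    rw [hΨΘ] at h1
    refine h1.trans ?_
    change _ ≤ _ * ‖Θ u‖
    gcongr
    linarith
end key
end Aux

namespace Aux
section fin
open scoped ComplexOrder

theorem conclude {A B X : Type u} [NonUnitalCStarAlgebra A] [NonUnitalCStarAlgebra B]
    [NonUnitalNormedRing X] [StarRing X] [NormedSpace ℂ X] [CompleteSpace X]
    [IsScalarTower ℂ X X] [SMulCommClass ℂ X X]
    (ι : A ⊗[ℂ] B →ₗ[ℂ] X) (hd : DenseRange ι)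
    (hm : ∀ (a c : A) (b d : B),
      ι (a ⊗ₜ[ℂ] b) * ι (c ⊗ₜ[ℂ] d) = ι ((a * c) ⊗ₜ[ℂ] (b * d)))
    (hs : ∀ (a : A) (b : B), star (ι (a ⊗ₜ[ℂ] b)) = ι (star a ⊗ₜ[ℂ] star b))
    (Y : Type u) [NonUnitalCStarAlgebra Y] (θ : A ⊗[ℂ] B ≃ₗ[ℂ] Y)
    (hm' : ∀ (a c : A) (b d : B),
      θ (a ⊗ₜ[ℂ] b) * θ (c ⊗ₜ[ℂ] d) = θ ((a * c) ⊗ₜ[ℂ] (b * d)))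
    (hs' : ∀ (a : A) (b : B), star (θ (a ⊗ₜ[ℂ] b)) = θ (star a ⊗ₜ[ℂ] star b))
    (C D : ℝ) (hC : ∀ u, ‖θ u‖ ≤ C * ‖ι u‖) (hD0 : 0 < D) (hD : ∀ u, ‖ι u‖ ≤ D * ‖θ u‖) :
    (∀ x : X, quasispectrum ℂ (star x * x) ⊆ {z : ℂ | z.im = 0 ∧ 0 ≤ z.re}) ∧
    Nonempty (OperatorAlgebraEmbedding X) ∧
    Nonempty (MinTensorWitness A B X ι) := by
  have hinj : Function.Injective ι := by
    rw [injective_iff_map_eq_zero]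
    intro u hu
    have := hC u
    rw [hu, norm_zero, mul_zero] at this
    exact θ.map_eq_zero_iff.1 (norm_le_zero_iff.1 this)
  have hsurj : Function.Surjective ι := by
    have hanti : AntilipschitzWith C.toNNReal (ι ∘ θ.symm) := by
      have : AntilipschitzWith C.toNNReal (ι.comp θ.symm.toLinearMap) := by
        refine AddMonoidHomClass.antilipschitz_of_bound _ fun y => ?_
        have := hC (θ.symm y)
        rw [θ.apply_symm_apply] at this
        exact this.trans (by gcongr; exacts [Real.le_coe_toNNReal C, le_rfl])
      exact this
    have hcont : UniformContinuous (ι ∘ θ.symm) := by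
      have : LipschitzWith D.toNNReal (ι.comp θ.symm.toLinearMap) := by
        refine AddMonoidHomClass.lipschitz_of_bound _ D fun y => ?_
        have := hD (θ.symm y)
        rw [θ.apply_symm_apply] at this
        exact this
      exact this.uniformContinuous
    have hcl := hanti.isClosed_range hcont
    have hr : Set.range (ι ∘ θ.symm) = Set.range ι := θ.symm.surjective.range_comp ι
    rw [hr] at hcl
    rw [← Set.range_eq_univ, ← hcl.closure_eq]
    exact hd.closure_range
  have hmul : ∀ u v, ∃ w, ι u * ι v = ι w ∧ θ u * θ v = θ w := by
    intro u v
    induction u using TensorProduct.induction_on with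
    | zero => exact ⟨0, by simp⟩
    | add u u' hu hu' =>
      obtain ⟨w, h1, h2⟩ := hu
      obtain ⟨w', h1', h2'⟩ := hu'
      exact ⟨w + w', by simp only [map_add, add_mul, h1, h1'], by simp only [map_add, add_mul, h2, h2']⟩
    | tmul a b =>
      induction v using TensorProduct.induction_on with
      | zero => exact ⟨0, by simp⟩
      | add u u' hu hu' =>
        obtain ⟨w, h1, h2⟩ := hu
        obtain ⟨w', h1', h2'⟩ := hu'
        exact ⟨w + w', by simp only [map_add, mul_add, h1, h1'],
          by simp only [map_add, mul_add, h2, h2']⟩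
      | tmul c d => exact ⟨_, hm a c b d, hm' a c b d⟩
  have hstar : ∀ u, ∃ w, star (ι u) = ι w ∧ star (θ u) = θ w := by
    intro u
    induction u using TensorProduct.induction_on with
    | zero => exact ⟨0, by simp⟩
    | add u u' hu hu' =>
      obtain ⟨w, h1, h2⟩ := hu
      obtain ⟨w', h1', h2'⟩ := hu'
      exact ⟨w + w', by simp only [map_add, star_add, h1, h1'], by simp only [map_add, star_add, h2, h2']⟩
    | tmul a b => exact ⟨_, hs a b, hs' a b⟩
  let e : A ⊗[ℂ] B ≃ₗ[ℂ] X := LinearEquiv.ofBijective ι ⟨hinj, hsurj⟩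
  have he : ∀ u, e u = ι u := fun _ => rfl
  have he' : ∀ u, e.symm (ι u) = u := fun u => e.symm_apply_apply u
  let g := e.symm.trans θ
  have hg : ∀ u, g (ι u) = θ u := fun u => congrArg θ (he' u)
  let iso : X ≃⋆ₐ[ℂ] Y :=
    { toFun := g
      invFun := g.symm
      left_inv := g.left_inv
      right_inv := g.right_inv
      map_add' := map_add g
      map_smul' := map_smul g
      map_mul' := fun x y => by
        obtain ⟨u, rfl⟩ := hsurj x
        obtain ⟨v, rfl⟩ := hsurj y
        obtain ⟨w, h1, h2⟩ := hmul u v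
        rw [h1, hg, hg, hg, h2]
      map_star' := fun x => by
        obtain ⟨u, rfl⟩ := hsurj x
        obtain ⟨w, h1, h2⟩ := hstar u
        rw [h1, hg, hg, h2] }
  have hiso : ∀ u, iso (ι u) = θ u := hg
  refine ⟨?_, ?_, ?_⟩
  · intro x z hz
    let _ := CStarAlgebra.spectralOrder Y
    have _ := CStarAlgebra.spectralOrderedRing Y
    have h1 : quasispectrum ℂ (iso.symm (iso (star x * x))) ⊆ quasispectrum ℂ (iso (star x * x)) :=
      NonUnitalAlgHom.quasispectrum_apply_subset iso.symm _
    rw [iso.symm_apply_apply, map_mul, map_star] at h1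
    have h2 := quasispectrum_nonneg_of_nonneg (star (iso x) * iso x) (star_mul_self_nonneg _) z (h1 hz)
    rw [Complex.nonneg_iff] at h2
    exact ⟨h2.2.symm, h2.1⟩
  · obtain ⟨K, i1, i2, i3, ρ, hρ⟩ := exists_gn Y
    refine ⟨{ H := K
              ρ := ρ.comp (NonUnitalAlgHomClass.toNonUnitalAlgHom iso)
              c := D⁻¹
              C := C
              c_pos := inv_pos.2 hD0
              lower := fun y => ?_
              upper := fun y => ?_ }⟩
    · obtain ⟨u, rfl⟩ := hsurj y
      change _ ≤ ‖ρ (iso (ι u))‖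
      rw [hρ, hiso, inv_mul_le_iff₀ hD0]
      exact hD u
    · obtain ⟨u, rfl⟩ := hsurj y
      change ‖ρ (iso (ι u))‖ ≤ _
      rw [hρ, hiso]
      exact hC u
  · refine ⟨{ Y := Y
              ιY := θ.toLinearMap
              inj := θ.injective
              dense := θ.surjective.denseRange
              mul_tmul := hm'
              star_tmul := hs'
              minimal := ?_
              iso := iso
              iso_comm := hiso }⟩
    intro Z _ ιZ hZi hZd hZm hZs u
    have hmulZ : ∀ u v, ∃ w, ιZ u * ιZ v = ιZ w ∧ θ u * θ v = θ w := by
      intro u v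
      induction u using TensorProduct.induction_on with
      | zero => exact ⟨0, by simp⟩
      | add u u' hu hu' =>
        obtain ⟨w, h1, h2⟩ := hu
        obtain ⟨w', h1', h2'⟩ := hu'
        exact ⟨w + w', by simp only [map_add, add_mul, h1, h1'],
          by simp only [map_add, add_mul, h2, h2']⟩
      | tmul a b =>
        induction v using TensorProduct.induction_on with
        | zero => exact ⟨0, by simp⟩
        | add u u' hu hu' =>
          obtain ⟨w, h1, h2⟩ := hu
          obtain ⟨w', h1', h2'⟩ := hu'
          exact ⟨w + w', by simp only [map_add, mul_add, h1, h1'],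
            by simp only [map_add, mul_add, h2, h2']⟩
        | tmul c d => exact ⟨_, hZm a c b d, hm' a c b d⟩
    have hstarZ : ∀ u, ∃ w, star (ιZ u) = ιZ w ∧ star (θ u) = θ w := by
      intro u
      induction u using TensorProduct.induction_on with
      | zero => exact ⟨0, by simp⟩
      | add u u' hu hu' =>
        obtain ⟨w, h1, h2⟩ := hu
        obtain ⟨w', h1', h2'⟩ := hu'
        exact ⟨w + w', by simp only [map_add, star_add, h1, h1'],
          by simp only [map_add, star_add, h2, h2']⟩
      | tmul a b => exact ⟨_, hZs a b, hs' a b⟩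
    let φ : Y →⋆ₙₐ[ℂ] Z :=
      { toFun := fun y => ιZ (θ.symm y)
        map_add' := fun x y => by simp
        map_zero' := by simp
        map_smul' := fun c x => by simp
        map_mul' := fun x y => by
          obtain ⟨u, rfl⟩ := θ.surjective x
          obtain ⟨v, rfl⟩ := θ.surjective y
          obtain ⟨w, h1, h2⟩ := hmulZ u v
          rw [h2, θ.symm_apply_apply, θ.symm_apply_apply, θ.symm_apply_apply, h1]
        map_star' := fun x => by
          obtain ⟨u, rfl⟩ := θ.surjective x
          obtain ⟨w, h1, h2⟩ := hstarZ u
          rw [h2, θ.symm_apply_apply, θ.symm_apply_apply, h1] }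
    have hφ : Function.Injective φ := hZi.comp θ.symm.injective
    have h1 := NonUnitalStarAlgHom.norm_map φ hφ (θ u)
    have h2 : φ (θ u) = ιZ u := congrArg ιZ (θ.symm_apply_apply u)
    rw [h2] at h1
    exact h1.symm.le

lemma swap_le {A B : Type u} [NonUnitalCStarAlgebra A] [NonUnitalCStarAlgebra B]
    {NA : ∀ p : ℕ, Matrix (Fin p) (Fin p) A → ℝ}
    {NB : ∀ q : ℕ, Matrix (Fin q) (Fin q) B → ℝ} (u : A ⊗[ℂ] B) :
    osProjNorm NB NA (TensorProduct.comm ℂ A B u) = osProjNorm NA NB u := by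
  unfold osProjNorm
  congr 1
  ext r
  constructor
  · rintro ⟨p, q, α, v, w, β, h1, h2⟩
    refine ⟨q, p, α ∘ Prod.swap, w, v, β ∘ Prod.swap, ?_, ?_⟩
    · apply (TensorProduct.comm ℂ A B).injective
      rw [h1, ← (Equiv.prodComm (Fin q) (Fin p)).sum_comp, map_sum]
      refine Finset.sum_congr rfl fun ik _ => ?_
      rw [← (Equiv.prodComm (Fin q) (Fin p)).sum_comp, map_sum]
      refine Finset.sum_congr rfl fun jl _ => ?_
      simp
    · rw [h2, ← (Equiv.prodComm (Fin q) (Fin p)).sum_comp,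
        ← (Equiv.prodComm (Fin q) (Fin p)).sum_comp (fun jl => ‖β jl‖ ^ 2)]
      simp only [Equiv.prodComm_apply, Function.comp]
      ring
  · rintro ⟨p, q, α, v, w, β, h1, h2⟩
    refine ⟨q, p, α ∘ Prod.swap, w, v, β ∘ Prod.swap, ?_, ?_⟩
    · rw [h1, ← (Equiv.prodComm (Fin q) (Fin p)).sum_comp, map_sum]
      refine Finset.sum_congr rfl fun ik _ => ?_
      rw [← (Equiv.prodComm (Fin q) (Fin p)).sum_comp, map_sum]
      refine Finset.sum_congr rfl fun jl _ => ?_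
      simp
    · rw [h2, ← (Equiv.prodComm (Fin q) (Fin p)).sum_comp,
        ← (Equiv.prodComm (Fin q) (Fin p)).sum_comp (fun jl => ‖β jl‖ ^ 2)]
      simp only [Equiv.prodComm_apply, Function.comp]
      ring
end fin
end Aux


/-- If `A` and `B` are C⋆-algebras and at least one of them is
finite-dimensional, then `A ⊗̂ B` is a symmetric operator algebra; in particular it is
`*`-isomorphic to the minimal C⋆-tensor product `A ⊗_min B`. -/
theorem osProjTensor_symmetric_operatorAlgebra_of_finiteDimensional {A B X : Type u} [NonUnitalCStarAlgebra A] [NonUnitalCStarAlgebra B]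
    [NonUnitalNormedRing X] [StarRing X] [NormedSpace ℂ X] [CompleteSpace X]
    [IsScalarTower ℂ X X] [SMulCommClass ℂ X X]
    (NA : ∀ p : ℕ, Matrix (Fin p) (Fin p) A → ℝ)
    (NB : ∀ q : ℕ, Matrix (Fin q) (Fin q) B → ℝ)
    (hNA : ∀ p, IsCStarNorm (NA p)) (hNB : ∀ q, IsCStarNorm (NB q))
    (ι : A ⊗[ℂ] B →ₗ[ℂ] X) (hX : IsTensorCompletion (osProjNorm NA NB) X ι)
    (hfd : FiniteDimensional ℂ A ∨ FiniteDimensional ℂ B) :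
    (∀ x : X, quasispectrum ℂ (star x * x) ⊆ {z : ℂ | z.im = 0 ∧ 0 ≤ z.re}) ∧
    Nonempty (OperatorAlgebraEmbedding X) ∧
    Nonempty (MinTensorWitness A B X ι) := by
  have hle : ∀ a b, ‖ι (a ⊗ₜ[ℂ] b)‖ ≤ ‖a‖ * ‖b‖ := fun a b => by
    rw [hX.norm_eq]; exact Aux.osProjNorm_tmul_le hNA hNB a b
  rcases hfd with h | h
  · obtain ⟨Y, _, θ, hm, hs, ⟨C, hC⟩, D, hD0, hD⟩ := Aux.exists_model A B
    refine Aux.conclude ι hX.dense hX.mul_tmul hX.star_tmul Y θ hm hs C D (fun u => ?_) hD0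
      (hD X ι hle)
    rw [hX.norm_eq]
    exact hC NA NB hNA hNB u (by rw [← hX.norm_eq]; exact norm_nonneg _)
  · obtain ⟨Y, _, θ, hm, hs, ⟨C, hC⟩, D, hD0, hD⟩ := Aux.exists_model B A
    refine Aux.conclude ι hX.dense hX.mul_tmul hX.star_tmul Y
      ((TensorProduct.comm ℂ A B).trans θ) (fun a c b d => ?_) (fun a b => ?_) C D
      (fun u => ?_) hD0 (fun u => ?_)
    · simp only [LinearEquiv.trans_apply, TensorProduct.comm_tmul]
      exact hm b d a c
    · simp only [LinearEquiv.trans_apply, TensorProduct.comm_tmul]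
      exact hs b a
    · have h0 : 0 ≤ osProjNorm NA NB u := by rw [← hX.norm_eq]; exact norm_nonneg _
      rw [hX.norm_eq, ← Aux.swap_le]
      exact hC NB NA hNB hNA (TensorProduct.comm ℂ A B u) (by rw [Aux.swap_le]; exact h0)
    · have := hD X (ι.comp (TensorProduct.comm ℂ B A).toLinearMap) (fun b a => by
        simpa [mul_comm] using hle a b) (TensorProduct.comm ℂ A B u)
      have e : (TensorProduct.comm ℂ B A) ((TensorProduct.comm ℂ A B) u) = u :=
        (TensorProduct.comm ℂ A B).symm_apply_apply u
      rw [LinearMap.comp_apply, LinearEquiv.coe_coe, e] at this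
      exact this

end
end

section
/- Let A be a commutative unital C*-algebra and let B be a unital operator algebra with isometric involution that is symmetric as a Banach *-algebra. Then the Banach *-algebra A ⊗̂ B is symmetric. -/
open scoped TensorProduct
open Pointwise

universe u

noncomputable section

open Complex.HadamardThreeLines in
lemma three_circles {B : Type*} [NormedRing B] [NormedAlgebra ℂ B] (u v : B) (m : ℕ) (L M₁ M₂ : ℝ) (hL : 0 < L)
    (hM₁ : 0 ≤ M₁) (hM₂ : 0 ≤ M₂)
    (h₁ : ∀ z : ℂ, ‖z‖ = Real.exp L → ‖(z • u + v) ^ m‖ ≤ M₁)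
    (h₂ : ∀ z : ℂ, ‖z‖ = Real.exp (-L) → ‖(z • u + v) ^ m‖ ≤ M₂) :
    ‖(u + v) ^ m‖ ^ 2 ≤ M₁ * M₂ := by
  have key := norm_le_interp_of_mem_verticalClosedStrip' (f := fun s : ℂ => (Complex.exp s • u + v) ^ m)
    (z := 0) (a := M₂) (b := M₁) (l := -L) (u := L) (by linarith)
    (by simp [verticalClosedStrip]; linarith) ?_ ?_ ?_ ?_
  · have e1 : (1 - ((0:ℂ).re - (-L)) / (L - (-L))) = 1/2 := by
      simp; field_simp; norm_num
    have e2 : (((0:ℂ).re - (-L)) / (L - (-L))) = 1/2 := by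
      simp; field_simp; norm_num
    rw [e1, e2, ← Real.sqrt_eq_rpow, ← Real.sqrt_eq_rpow] at key
    simp only [Complex.exp_zero, one_smul] at key
    calc _ ≤ (√M₂ * √M₁)^2 := by gcongr
      _ = _ := by rw [mul_pow, Real.sq_sqrt hM₂, Real.sq_sqrt hM₁, mul_comm]
  · apply Differentiable.diffContOnCl
    fun_prop
  · obtain ⟨K, hK⟩ := ((isCompact_closedBall (0:ℂ) (Real.exp L)).image (f := fun z : ℂ => ‖(z • u + v) ^ m‖) (by fun_prop)).bddAbove
    refine ⟨K, ?_⟩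
    rintro _ ⟨s, hs, rfl⟩
    apply hK
    refine ⟨Complex.exp s, ?_, rfl⟩
    simp [Complex.norm_exp]
    exact hs.2
  · intro z hz
    apply h₂
    have : z.re = -L := hz
    rw [Complex.norm_exp, this]
  · intro z hz
    apply h₁
    have : z.re = L := hz
    rw [Complex.norm_exp, this]

lemma exists_norm_pow_two_pow_lt {B : Type*} [NormedRing B] [NormedAlgebra ℂ B] [CompleteSpace B] (b : B) (r M : ℝ)
    (hr : ∀ z ∈ spectrum ℂ b, ‖z‖ ≤ r) (hM : r < M) (hM0 : 0 < M) : ∃ k : ℕ, ‖b ^ (2 ^ k)‖ < M ^ (2 ^ k) := by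
  have h1 : spectralRadius ℂ b < ENNReal.ofReal M := by
    refine lt_of_le_of_lt (b := ENNReal.ofReal r) ?_ ((ENNReal.ofReal_lt_ofReal_iff hM0).2 hM)
    refine iSup₂_le fun z hz => ?_
    rw [← ENNReal.ofReal_coe_nnreal]
    exact ENNReal.ofReal_le_ofReal (hr z hz)
  have h2 := (spectrum.pow_norm_pow_one_div_tendsto_nhds_spectralRadius b).eventually_lt_const h1
  have h3 : Filter.Tendsto (fun k : ℕ => 2 ^ k) Filter.atTop Filter.atTop :=
    tendsto_pow_atTop_atTop_of_one_lt (r := 2) (by norm_num)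
  obtain ⟨k, hk⟩ := (h3.eventually h2).exists
  refine ⟨k, ?_⟩
  rw [ENNReal.ofReal_lt_ofReal_iff hM0, one_div] at hk
  rw [← Real.rpow_natCast M]
  rwa [Real.rpow_inv_lt_iff_of_pos (by positivity) hM0.le (by positivity)] at hk

lemma ransford {X B : Type*} [NormedRing X] [NormedAlgebra ℂ X] [CompleteSpace X]
    [NormedRing B] [NormedAlgebra ℂ B] [CompleteSpace B] (T : X →ₐ[ℂ] B) (a : X) (s : ℕ → X)
    (hs : Filter.Tendsto s Filter.atTop (nhds 0))
    (hTs : Filter.Tendsto (fun n => T (s n)) Filter.atTop (nhds (T a))) : IsUnit (1 - T a) := by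
  set M₁ := (‖a‖ + 2) * (‖(1:X)‖ + 1) with hM₁
  have hM₁pos : 0 < M₁ := by positivity
  set K := ‖T a‖ + 2 with hK
  have hKpos : 0 < K := by positivity
  -- choose L
  obtain ⟨L, hL, hLlt⟩ : ∃ L : ℝ, 0 < L ∧ M₁ * (K * Real.exp (-L)) < 1 := by
    have : Filter.Tendsto (fun L : ℝ => M₁ * (K * Real.exp (-L))) Filter.atTop (nhds (M₁ * (K * 0))) :=
      (Real.tendsto_exp_neg_atTop_nhds_zero.const_mul K).const_mul M₁
    rw [mul_zero, mul_zero] at this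
    obtain ⟨L, h1, h2⟩ := ((this.eventually_lt_const one_pos).and (Filter.eventually_gt_atTop 0)).exists
    exact ⟨L, h2, h1⟩
  set R := Real.exp L with hR
  have hRpos : 0 < R := Real.exp_pos L
  have hR1 : 1 ≤ R := Real.one_le_exp hL.le
  have hRinv : Real.exp (-L) = R⁻¹ := Real.exp_neg L
  rw [hRinv] at hLlt
  -- choose n
  have e1 : ∀ᶠ n in Filter.atTop, ‖s n‖ < 1 / (R + 1) := by
    have := hs.norm; rw [norm_zero] at this
    exact this.eventually_lt_const (by positivity)
  have e2 : ∀ᶠ n in Filter.atTop, ‖T a - T (s n)‖ < R⁻¹ := by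
    have := (hTs.const_sub (T a)).norm; rw [sub_self, norm_zero] at this
    exact this.eventually_lt_const (by positivity)
  obtain ⟨n, h1, h2⟩ := (e1.and e2).exists
  set u := T (s n) with hu
  set v := T a - u with hv
  have hunorm : ‖u‖ ≤ ‖T a‖ + 1 := by
    have : u = T a - v := by rw [hv]; abel
    rw [this]
    have h3 : R⁻¹ ≤ 1 := inv_le_one_of_one_le₀ hR1
    linarith [norm_sub_le (T a) v]
  have hbig : ∀ z ∈ Metric.sphere (0:ℂ) R, ∃ k : ℕ, ‖(z • u + v) ^ (2 ^ k)‖ < M₁ ^ (2 ^ k) := by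
    intro z hz
    have hz' : ‖z‖ = R := by simpa using hz
    apply exists_norm_pow_two_pow_lt _ ((‖a‖ + 1) * ‖(1:X)‖) M₁ _ _ hM₁pos
    · intro w hw
      have e : z • u + v = T (z • s n + (a - s n)) := by simp [hu, hv]
      rw [e] at hw
      have := spectrum.norm_le_norm_mul_of_mem (AlgHom.spectrum_apply_subset T _ hw)
      refine this.trans ?_
      gcongr
      calc _ ≤ ‖z • s n‖ + (‖a‖ + ‖s n‖) := (norm_add_le _ _).trans (by gcongr; exact norm_sub_le _ _)
        _ = ‖a‖ + (R + 1) * ‖s n‖ := by rw [norm_smul, hz']; ring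
        _ ≤ ‖a‖ + (R + 1) * (1 / (R + 1)) := by gcongr
        _ = _ := by field_simp
    · rw [hM₁]; nlinarith [norm_nonneg a, norm_nonneg (1:X)]
  obtain ⟨k, hk⟩ : ∃ k : ℕ, ∀ z ∈ Metric.sphere (0:ℂ) R, ‖(z • u + v) ^ (2 ^ k)‖ < M₁ ^ (2 ^ k) := by
    have := (isCompact_sphere (0:ℂ) R).elim_directed_cover
      (fun k : ℕ => {z : ℂ | ‖(z • u + v) ^ (2 ^ k)‖ < M₁ ^ (2 ^ k)})
      (fun k => isOpen_lt (by fun_prop) (by fun_prop))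
      (fun z hz => Set.mem_iUnion.2 (hbig z hz)) ?_
    · obtain ⟨k, hk⟩ := this
      exact ⟨k, fun z hz => hk hz⟩
    · apply Monotone.directed_le
      apply monotone_nat_of_le_succ
      intro k z hz
      simp only [Set.mem_ofPred_eq] at hz ⊢
      rw [pow_succ, pow_mul, pow_mul, pow_two]
      calc _ ≤ ‖(z • u + v) ^ 2 ^ k‖ * ‖(z • u + v) ^ 2 ^ k‖ := norm_mul_le _ _
        _ = ‖(z • u + v) ^ 2 ^ k‖ ^ 2 := by ring
        _ < _ := by gcongr
  have hsmall : ∀ z : ℂ, ‖z‖ = Real.exp (-L) → ‖(z • u + v) ^ (2 ^ k)‖ ≤ (K * R⁻¹) ^ (2 ^ k) := by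
    intro z hz
    rw [hRinv] at hz
    calc _ ≤ ‖z • u + v‖ ^ (2 ^ k) := norm_pow_le' _ (by positivity)
      _ ≤ _ := by
        gcongr
        calc _ ≤ ‖z • u‖ + ‖v‖ := norm_add_le _ _
          _ ≤ R⁻¹ * (‖T a‖ + 1) + R⁻¹ := by rw [norm_smul, hz]; gcongr
          _ = _ := by rw [hK]; ring
  have := three_circles u v (2 ^ k) L (M₁ ^ (2 ^ k)) ((K * R⁻¹) ^ (2 ^ k)) hL (by positivity) (by positivity)
    (fun z hz => (hk z (by simpa using hz)).le) hsmall
  have huv : u + v = T a := by rw [hv]; abel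
  rw [huv, ← mul_pow] at this
  have hlt : ‖(T a) ^ (2 ^ k)‖ < 1 := by
    have h4 : (M₁ * (K * R⁻¹)) ^ (2 ^ k) < 1 := pow_lt_one₀ (by positivity) hLlt (by positivity)
    nlinarith [norm_nonneg ((T a) ^ (2 ^ k))]
  have hun : IsUnit (1 - (T a) ^ (2 ^ k)) := isUnit_one_sub_of_norm_lt_one hlt
  rw [← mul_neg_geom_sum] at hun
  refine ((Commute.isUnit_mul_iff ?_).1 hun).1
  exact Commute.sum_right _ _ _ fun i _ =>
    ((Commute.one_left _).sub_left ((Commute.refl (T a)).pow_right i))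

/-- minimality of the C⋆-norm on a commutative C⋆-algebra -/
lemma sa_le_of_cstar {A : Type*} [CommCStarAlgebra A] (n : A → ℝ)
    (hadd : ∀ x y, n (x + y) ≤ n x + n y) (hsmul : ∀ (c : ℂ) x, n (c • x) = ‖c‖ * n x)
    (hstar : ∀ x, n (star x * x) = n x * n x) :
    (∀ x, 0 ≤ n x) ∧ ∀ a : A, IsSelfAdjoint a → n a ≤ ‖a‖ := by
  let _ := CStarAlgebra.spectralOrder A
  have := CStarAlgebra.spectralOrderedRing A
  have n0 : n 0 = 0 := by simpa using hsmul 0 0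
  have nneg : ∀ x, 0 ≤ n x := fun x => by
    have h1 := hadd x ((-1 : ℂ) • x)
    rw [hsmul] at h1
    simp [n0] at h1
    linarith
  have n1 : n 1 ≤ 1 := by
    have := hstar 1
    simp only [star_one, mul_one] at this
    nlinarith [nneg 1]
  have nu : ∀ u : unitary A, n (u : A) ≤ 1 := fun u => by
    have := hstar (u : A)
    rw [Unitary.coe_star_mul_self] at this
    nlinarith [nneg (u : A)]
  have nsa1 : ∀ a : A, IsSelfAdjoint a → ‖a‖ ≤ 1 → n a ≤ 1 := fun a ha h1 => by
    let a' : selfAdjoint A := ⟨a, ha⟩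
    have ha' : ‖a'‖ ≤ 1 := h1
    set u := selfAdjoint.unitarySelfAddISMul a' ha'
    have e : a = (1/2 : ℂ) • ((u : A) + ((star u : unitary A) : A)) := by
      have := selfAdjoint.realPart_unitarySelfAddISMul a' ha'
      have := congrArg (Subtype.val) this
      rw [realPart_apply_coe] at this
      rw [show a = (a' : A) from rfl, ← this, ← Complex.coe_smul]
      congr 1
      simp
    rw [e, hsmul]
    have := hadd (u : A) ((star u : unitary A) : A)
    have h2 := nu u
    have h3 := nu (star u)
    have h4 : ‖(1/2 : ℂ)‖ = 1/2 := by norm_num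
    rw [h4]
    linarith
  have nsa : ∀ a : A, IsSelfAdjoint a → n a ≤ ‖a‖ := fun a ha => by
    by_cases h0 : a = 0
    · simp [h0, n0]
    have hpos : 0 < ‖a‖ := norm_pos_iff.2 h0
    have h1 := nsa1 (((‖a‖⁻¹ : ℝ) : ℂ) • a) ?_ ?_
    · rw [hsmul] at h1
      simp at h1
      rwa [inv_mul_le_iff₀ hpos, mul_one] at h1
    · rw [IsSelfAdjoint, star_smul, ha.star_eq]; simp
    · rw [norm_smul]; simp; field_simp; rfl
  exact ⟨nneg, nsa⟩

lemma char_le_of_cstar {A : Type*} [CommCStarAlgebra A] (n : A → ℝ)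
    (hadd : ∀ x y, n (x + y) ≤ n x + n y) (hsmul : ∀ (c : ℂ) x, n (c • x) = ‖c‖ * n x)
    (hzero : ∀ x, n x = 0 → x = 0) (hmul : ∀ x y, n (x * y) ≤ n x * n y)
    (hstar : ∀ x, n (star x * x) = n x * n x)
    (φ : A →ₐ[ℂ] ℂ) (h : A) (hh : IsSelfAdjoint h) : (φ h).re ≤ n h := by
  let _ := CStarAlgebra.spectralOrder A
  have := CStarAlgebra.spectralOrderedRing A
  obtain ⟨nneg, nsa⟩ := sa_le_of_cstar n hadd hsmul hstar
  by_contra hcon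
  push Not at hcon
  obtain ⟨r, hr1, hr2⟩ := exists_between hcon
  have hr0 : 0 < r := (nneg h).trans_lt hr1
  set f : A := cfc (fun t : ℝ => max (t - r) 0) h with hf
  set k : A := cfc (fun t : ℝ => (max t r)⁻¹) h with hk
  have hmaxpos : ∀ t : ℝ, 0 < max t r := fun t => lt_max_of_lt_right hr0
  have hcont : Continuous (fun t : ℝ => (max t r)⁻¹) := 
    (continuous_id.max continuous_const).inv₀ fun t => (hmaxpos t).ne'
  have hkn : ‖k‖ ≤ r⁻¹ := by
    apply norm_cfc_le (by positivity)
    intro t _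
    rw [Real.norm_of_nonneg (inv_nonneg.2 (hmaxpos t).le)]
    gcongr
    exact le_max_right _ _
  have hksa : IsSelfAdjoint k := cfc_predicate _ _
  have hφh : (φ h).re ∈ spectrum ℝ h := by
    have h1 : φ h ∈ spectrum ℂ h := AlgHom.apply_mem_spectrum φ h
    have h2 := hh.mem_spectrum_eq_re h1
    rw [h2] at h1
    exact (spectrum.algebraMap_mem_iff ℂ).1 h1
  have hf0 : f ≠ 0 := by
    intro h0
    have h1 : Set.EqOn (fun t : ℝ => max (t - r) 0) (fun _ => 0) (spectrum ℝ h) := by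
      rw [← cfc_eq_cfc_iff_eqOn (a := h) (ha := hh) (hf := by fun_prop) (hg := by fun_prop)]
      rw [← hf, h0]; simp
    have := h1 hφh
    simp at this
    linarith
  have heq : h * k * f = f := by
    have e1 : cfc (fun t : ℝ => t) h = h := cfc_id' ℝ h
    have e2 : h * k = cfc (fun t : ℝ => t * (max t r)⁻¹) h := by
      rw [cfc_mul (fun t : ℝ => t) _ h (by fun_prop) hcont.continuousOn, e1]
    have hcont2 : Continuous (fun t : ℝ => t * (max t r)⁻¹) := continuous_id.mul hcont
    rw [e2, hf, ← cfc_mul (fun t : ℝ => t * (max t r)⁻¹) (fun t : ℝ => max (t - r) 0) h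
      hcont2.continuousOn (by fun_prop)]
    congr 1
    ext t
    rcases le_total t r with htr | htr
    · rw [max_eq_right (sub_nonpos.2 htr), mul_zero]
    · rw [max_eq_left htr, mul_inv_cancel₀ (hr0.trans_le htr).ne', one_mul]
  have hnf : 0 < n f := lt_of_le_of_ne (nneg f) fun h0 => hf0 (hzero _ h0.symm)
  have : n f < n f := by
    calc n f = n (h * k * f) := by rw [heq]
      _ ≤ n (h * k) * n f := hmul _ _
      _ ≤ (n h * n k) * n f := by gcongr; exact hmul _ _
      _ ≤ (n h * r⁻¹) * n f := by 
        have := nneg h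
        gcongr; exact (nsa k hksa).trans hkn
      _ < (r * r⁻¹) * n f := by gcongr
      _ = n f := by field_simp
  exact lt_irrefl _ this

lemma exists_char_of_closed_prime {A : Type*} [CommCStarAlgebra A] (P : Ideal A)
    (hcl : IsClosed (P : Set A)) (hP : P.IsPrime) :
    ∃ φ : A →ₐ[ℂ] ℂ, ∀ a, φ a = 0 → a ∈ P := by
  obtain ⟨M, hM, hPM⟩ := P.exists_le_maximal hP.ne_top
  set χ := M.toCharacterSpace
  set φ : A →ₐ[ℂ] ℂ := WeakDual.CharacterSpace.equivAlgHom χ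
  have hφ : ∀ a ∈ P, φ a = 0 := fun a ha => M.toCharacterSpace_apply_eq_zero_of_mem (hPM ha)
  have hφstar : ∀ a, φ (star a) = star (φ a) := fun a => map_star χ a
  refine ⟨φ, ?_⟩
  have hsq : ∀ a : A, IsSelfAdjoint a → φ a = 0 → a ∈ P := by
    intro a ha h0
    set f : ℝ → A := fun ε => cfc (fun t : ℝ => max (|t| - ε) 0) a with hf
    have hfP : ∀ ε > 0, f ε ∈ P := by
      intro ε hε
      set e : A := cfc (fun t : ℝ => max (ε - |t|) 0) a with he
      have hef : e * f ε = 0 := by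
        rw [he, hf, ← cfc_mul _ _ a (by fun_prop) (by fun_prop)]
        rw [← cfc_zero ℝ a]
        congr 1
        ext t
        rcases le_total |t| ε with h1 | h1
        · simp [h1]
        · simp [h1]
      rcases hP.mem_or_mem (show e * f ε ∈ P by rw [hef]; exact P.zero_mem) with h1 | h1
      · exfalso
        have h2 := hφ e h1
        have h3 : χ e = cfc (fun t : ℝ => max (ε - |t|) 0) (χ a) :=
          StarAlgHomClass.map_cfc (R := ℝ) (S := ℂ) χ _ a (by fun_prop)
            (ContinuousMapClass.map_continuous χ) ha (by rw [show χ a = 0 from h0]; exact .zero _)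
        rw [show χ a = 0 from h0, cfc_apply_zero, show χ e = 0 from h2] at h3
        simp [hε.le] at h3
        exact hε.ne (by exact_mod_cast h3)
      · exact h1
    have habs : cfc (fun t : ℝ => |t|) a ∈ P := by
      refine hcl.mem_of_tendsto (f := fun k : ℕ => f (1 / ((k : ℝ) + 1))) (b := Filter.atTop) ?_
        (Filter.Eventually.of_forall fun k => hfP _ (by positivity))
      rw [tendsto_iff_norm_sub_tendsto_zero]
      refine squeeze_zero (fun _ => norm_nonneg _) (fun k => ?_) (tendsto_one_div_add_atTop_nhds_zero_nat (𝕜 := ℝ))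
      rw [hf, ← cfc_sub _ _ a (by fun_prop) (by fun_prop)]
      have hp : (0:ℝ) ≤ 1 / ((k:ℝ) + 1) := by positivity
      apply norm_cfc_le hp
      intro t _
      rw [Real.norm_eq_abs, abs_le]
      have := abs_nonneg t
      rcases le_total (|t|) (1 / ((k:ℝ) + 1)) with h1 | h1
      · rw [max_eq_right (by linarith)]; constructor <;> linarith
      · rw [max_eq_left (by linarith)]; constructor <;> linarith
    have hmul : a * a = cfc (fun t : ℝ => |t|) a * cfc (fun t : ℝ => |t|) a := by
      rw [← cfc_mul _ _ a (by fun_prop) (by fun_prop)]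
      simp only [abs_mul_abs_self]
      rw [cfc_mul (fun t : ℝ => t) (fun t => t) a (by fun_prop) (by fun_prop), cfc_id' ℝ a]
    have : a * a ∈ P := by rw [hmul]; exact P.mul_mem_left _ habs
    exact (hP.mem_or_mem this).elim id id
  intro a h0
  rw [← realPart_add_I_smul_imaginaryPart a]
  have hr : φ (realPart a : A) = 0 := by
    rw [realPart_apply_coe, ← Complex.coe_smul, map_smul, map_add, hφstar, h0]; simp
  have hi : φ (imaginaryPart a : A) = 0 := by
    rw [imaginaryPart_apply_coe, ← Complex.coe_smul, map_smul, map_smul, map_sub, hφstar, h0]; simp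
  refine P.add_mem (hsq _ (realPart a).2 hr) ?_
  rw [Algebra.smul_def]
  exact P.mul_mem_left _ (hsq _ (imaginaryPart a).2 hi)


lemma cstarNorm_matrix_bound {A : Type*} [CommCStarAlgebra A] {p : ℕ}
    (N : Matrix (Fin p) (Fin p) A → ℝ) (hN : IsCStarNorm N) (φ : A →ₐ[ℂ] ℂ)
    (v : Matrix (Fin p) (Fin p) A) (z : Fin p → ℂ) :
    ∑ i, ‖∑ j, φ (v i j) * z j‖ ^ 2 ≤ N v ^ 2 * ∑ j, ‖z j‖ ^ 2 := by
  classical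
  rcases isEmpty_or_nonempty (Fin p) with hp | ⟨⟨i₀⟩⟩
  · simp
  have N0 : N 0 = 0 := by simpa using hN.smul_eq 0 0
  have Nneg : ∀ x, 0 ≤ N x := fun x => by
    have h1 := hN.add_le x ((-1 : ℂ) • x)
    rw [hN.smul_eq] at h1
    simp [N0] at h1
    linarith
  have hφstar : ∀ a, φ (star a) = star (φ a) := fun a =>
    map_star (WeakDual.CharacterSpace.equivAlgHom.symm φ) a
  let col : (Fin p → A) → Matrix (Fin p) (Fin p) A := fun c => Matrix.of fun i j => if j = i₀ then c i else 0
  have hcol : ∀ c, star (col c) * col c = Matrix.single i₀ i₀ (∑ i, star (c i) * c i) := by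
    intro c
    ext i j
    simp only [Matrix.mul_apply, Matrix.star_apply, col, Matrix.of_apply, Matrix.single_apply]
    by_cases hi : i = i₀ <;> by_cases hj : j = i₀ <;> simp [hi, hj, eq_comm (a := i₀)]
  have hvcol : ∀ c, v * col c = col (fun i => ∑ j, v i j * c j) := by
    intro c
    ext i j
    simp only [Matrix.mul_apply, col, Matrix.of_apply]
    by_cases hj : j = i₀ <;> simp [hj]
  let n : A → ℝ := fun a => N (Matrix.single i₀ i₀ a)
  have hn1 : n 1 ≤ 1 := by
    have := hN.star_mul_self (Matrix.single i₀ i₀ (1 : A))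
    rw [Matrix.star_eq_conjTranspose, Matrix.conjTranspose_single, Matrix.single_mul_single_same] at this
    simp only [star_one, mul_one] at this
    have h2 := Nneg (Matrix.single i₀ i₀ (1 : A))
    show N (Matrix.single i₀ i₀ (1 : A)) ≤ 1
    nlinarith
  have hchar : ∀ a : A, IsSelfAdjoint a → (φ a).re ≤ n a := by
    intro a ha
    refine char_le_of_cstar n ?_ ?_ ?_ ?_ ?_ φ a ha
    · intro x y
      simp only [n, Matrix.single_add]; exact hN.add_le _ _
    · intro c x
      simp only [n, ← Matrix.smul_single]; exact hN.smul_eq _ _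
    · intro x hx
      have := hN.eq_zero_of _ hx
      have := congrFun (congrFun this i₀) i₀
      simpa using this
    · intro x y
      have := hN.mul_le (Matrix.single i₀ i₀ x) (Matrix.single i₀ i₀ y)
      rwa [Matrix.single_mul_single_same] at this
    · intro x
      have := hN.star_mul_self (Matrix.single i₀ i₀ x)
      rwa [Matrix.star_eq_conjTranspose, Matrix.conjTranspose_single, Matrix.single_mul_single_same] at this
  let c : Fin p → A := fun j => z j • (1 : A)
  let s : Fin p → A := fun i => ∑ j, v i j * c j
  have hφs : ∀ i, φ (s i) = ∑ j, φ (v i j) * z j := by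
    intro i
    simp only [s, c, map_sum, map_mul, map_smul, map_one, smul_eq_mul, mul_one]
  have hcc : ∑ i, star (c i) * c i = ((∑ j, ‖z j‖ ^ 2 : ℝ) : ℂ) • (1 : A) := by
    push_cast
    rw [Finset.sum_smul]
    refine Finset.sum_congr rfl fun i _ => ?_
    simp only [c, star_smul, star_one, smul_mul_smul_comm, mul_one]
    congr 1
    exact Complex.conj_mul' (z i)
  have hcolc : N (col c) ^ 2 ≤ ∑ j, ‖z j‖ ^ 2 := by
    rw [pow_two, ← hN.star_mul_self, hcol, hcc, ← Matrix.smul_single, hN.smul_eq, Complex.norm_real,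
      Real.norm_of_nonneg (by positivity)]
    exact mul_le_of_le_one_right (by positivity) hn1
  have hfin : (φ (∑ i, star (s i) * s i)).re ≤ N v ^ 2 * ∑ j, ‖z j‖ ^ 2 := by
    calc _ ≤ n (∑ i, star (s i) * s i) := hchar _ (isSelfAdjoint_sum _ fun i _ => IsSelfAdjoint.star_mul_self _)
      _ = N (col s) ^ 2 := by
        rw [pow_two, ← hN.star_mul_self, hcol]
      _ ≤ (N v * N (col c)) ^ 2 := by
        have := hN.mul_le v (col c)
        rw [hvcol] at this
        exact pow_le_pow_left₀ (Nneg _) this 2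
      _ ≤ _ := by rw [mul_pow]; gcongr
  refine le_trans (le_of_eq ?_) hfin
  rw [map_sum, Complex.re_sum]
  refine Finset.sum_congr rfl fun i _ => ?_
  rw [map_mul, hφstar, ← hφs i]
  have := Complex.conj_mul' (φ (s i))
  rw [show star (φ (s i)) = (starRingEnd ℂ) (φ (s i)) from rfl, this]
  norm_cast

section opm
variable {H : Type u} [NormedAddCommGroup H] [InnerProductSpace ℂ H]

lemma opMatrixNorm_bddAbove {p : ℕ} (T : Matrix (Fin p) (Fin p) (H →L[ℂ] H)) :
    BddAbove { r : ℝ | ∃ x : Fin p → H, (∑ i, ‖x i‖ ^ 2) ≤ 1 ∧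
      r = Real.sqrt (∑ i, ‖∑ j, (T i j) (x j)‖ ^ 2) } := by
  refine ⟨Real.sqrt (∑ i, (∑ j, ‖T i j‖) ^ 2), ?_⟩
  rintro _ ⟨x, hx, rfl⟩
  have hx1 : ∀ j, ‖x j‖ ≤ 1 := fun j => by
    have := (Finset.single_le_sum (f := fun i => ‖x i‖ ^ 2) (fun i _ => by positivity) (Finset.mem_univ j)).trans hx
    exact (sq_le_one_iff₀ (norm_nonneg _)).1 this
  gcongr with i
  refine (norm_sum_le _ _).trans (Finset.sum_le_sum fun j _ => ?_)
  exact ((T i j).le_opNorm _).trans (mul_le_of_le_one_right (norm_nonneg _) (hx1 j))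

lemma opMatrixNorm_nonneg {p : ℕ} (T : Matrix (Fin p) (Fin p) (H →L[ℂ] H)) : 0 ≤ opMatrixNorm T := by
  apply Real.sSup_nonneg
  rintro _ ⟨x, hx, rfl⟩
  positivity

lemma opMatrixNorm_bound {p : ℕ} (T : Matrix (Fin p) (Fin p) (H →L[ℂ] H)) (x : Fin p → H) :
    ∑ i, ‖∑ j, (T i j) (x j)‖ ^ 2 ≤ opMatrixNorm T ^ 2 * ∑ j, ‖x j‖ ^ 2 := by
  set S := ∑ j, ‖x j‖ ^ 2 with hS
  have hS0 : 0 ≤ S := by positivity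
  rcases hS0.eq_or_lt with h0 | hpos
  · have : ∀ j, x j = 0 := fun j => by
      have := (Finset.sum_eq_zero_iff_of_nonneg (fun i _ => by positivity)).1 h0.symm j (Finset.mem_univ j)
      simpa using this
    rw [← h0]; simp [this]
  · set c : ℂ := (((√S)⁻¹ : ℝ) : ℂ) with hc
    have hcn : ‖c‖ ^ 2 = S⁻¹ := by
      rw [hc, Complex.norm_real, Real.norm_of_nonneg (by positivity), inv_pow, Real.sq_sqrt hS0]
    have h1 : Real.sqrt (∑ i, ‖∑ j, (T i j) (c • x j)‖ ^ 2) ≤ opMatrixNorm T := by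
      apply le_csSup (opMatrixNorm_bddAbove T)
      refine ⟨fun j => c • x j, ?_, rfl⟩
      simp only [norm_smul, mul_pow, hcn]
      rw [← Finset.mul_sum, ← hS, inv_mul_cancel₀ hpos.ne']
    have h2 := (Real.sqrt_le_left (opMatrixNorm_nonneg T)).1 h1
    simp only [map_smul, ← Finset.smul_sum, norm_smul, mul_pow, hcn] at h2
    rw [← Finset.mul_sum, inv_mul_le_iff₀ hpos] at h2
    linarith

lemma opMatrixNorm_one_le (T : Matrix (Fin 1) (Fin 1) (H →L[ℂ] H)) : opMatrixNorm T ≤ ‖T 0 0‖ := by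
  apply Real.sSup_le _ (norm_nonneg _)
  rintro _ ⟨x, hx, rfl⟩
  simp only [Finset.univ_unique, Fin.default_eq_zero, Finset.sum_singleton] at hx ⊢
  rw [Real.sqrt_sq (norm_nonneg _)]
  exact ((T 0 0).le_opNorm _).trans (mul_le_of_le_one_right (norm_nonneg _)
    ((sq_le_one_iff₀ (norm_nonneg _)).1 hx))

lemma slice_norm_bound {p q : ℕ} (V : Fin p → Fin p → ℂ) (Nv : ℝ) (hNv : 0 ≤ Nv)
    (hV : ∀ z : Fin p → ℂ, ∑ i, ‖∑ j, V i j * z j‖ ^ 2 ≤ Nv ^ 2 * ∑ j, ‖z j‖ ^ 2)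
    (T : Matrix (Fin q) (Fin q) (H →L[ℂ] H)) (α β : Fin p × Fin q → ℂ) :
    ‖∑ ik : Fin p × Fin q, ∑ jl : Fin p × Fin q, (α ik * β jl) • (V ik.1 jl.1 • T ik.2 jl.2)‖ ≤
      Real.sqrt (∑ ik, ‖α ik‖ ^ 2) * Nv * opMatrixNorm T * Real.sqrt (∑ jl, ‖β jl‖ ^ 2) := by
  have hT0 := opMatrixNorm_nonneg T
  refine ContinuousLinearMap.opNorm_le_bound _ (by positivity) fun h => ?_
  set Y := (∑ ik : Fin p × Fin q, ∑ jl : Fin p × Fin q, (α ik * β jl) • (V ik.1 jl.1 • T ik.2 jl.2)) with hY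
  set K := Real.sqrt (∑ ik, ‖α ik‖ ^ 2) * Nv * opMatrixNorm T * Real.sqrt (∑ jl, ‖β jl‖ ^ 2) with hK
  suffices hg : ∀ g : H, ‖inner ℂ g (Y h)‖ ≤ K * ‖h‖ * ‖g‖ by
    have h1 := hg (Y h)
    rw [inner_self_eq_norm_sq_to_K] at h1
    simp at h1
    rcases (norm_nonneg (Y h)).eq_or_lt with h0 | hpos
    · rw [← h0]; positivity
    · rw [pow_two] at h1; exact le_of_mul_le_mul_right h1 hpos
  intro g
  let z : Fin q → Fin p → ℂ := fun k j => ∑ l, β (j, l) * inner ℂ g (T k l h)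
  let t : Fin p × Fin q → ℂ := fun ik => ∑ j, V ik.1 j * z ik.2 j
  have hinner : inner ℂ g (Y h) = ∑ ik, α ik * t ik := by
    simp only [hY, t, z, sum_apply, smul_apply, inner_sum, inner_smul_right,
      Fintype.sum_prod_type, Finset.mul_sum]
    refine Finset.sum_congr rfl fun i _ => Finset.sum_congr rfl fun k _ =>
      Finset.sum_congr rfl fun j _ => Finset.sum_congr rfl fun l _ => ?_
    ring
  have hz : ∑ k, ∑ j, ‖z k j‖ ^ 2 ≤ (‖g‖ * opMatrixNorm T * ‖h‖) ^ 2 * ∑ jl, ‖β jl‖ ^ 2 := by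
    rw [Finset.sum_comm, Fintype.sum_prod_type, Finset.mul_sum]
    refine Finset.sum_le_sum fun j _ => ?_
    have e : ∀ k, z k j = inner ℂ g (∑ l, T k l (β (j, l) • h)) := by
      intro k; simp only [z, inner_sum, map_smul, inner_smul_right]
    calc ∑ k, ‖z k j‖ ^ 2 ≤ ∑ k, ‖g‖ ^ 2 * ‖∑ l, T k l (β (j, l) • h)‖ ^ 2 := by
          refine Finset.sum_le_sum fun k _ => ?_
          rw [e, ← mul_pow]
          gcongr
          exact norm_inner_le_norm _ _
      _ = ‖g‖ ^ 2 * ∑ k, ‖∑ l, T k l (β (j, l) • h)‖ ^ 2 := by rw [Finset.mul_sum]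
      _ ≤ ‖g‖ ^ 2 * (opMatrixNorm T ^ 2 * ∑ l, ‖β (j, l) • h‖ ^ 2) := by
          gcongr; exact opMatrixNorm_bound T _
      _ = _ := by
          simp only [norm_smul, mul_pow]
          rw [← Finset.sum_mul]; ring
  have ht : ∑ ik, ‖t ik‖ ^ 2 ≤ (Nv * (‖g‖ * opMatrixNorm T * ‖h‖)) ^ 2 * ∑ jl, ‖β jl‖ ^ 2 := by
    rw [Fintype.sum_prod_type, Finset.sum_comm]
    calc _ ≤ ∑ k, Nv ^ 2 * ∑ j, ‖z k j‖ ^ 2 := Finset.sum_le_sum fun k _ => hV (z k)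
      _ = Nv ^ 2 * ∑ k, ∑ j, ‖z k j‖ ^ 2 := by rw [Finset.mul_sum]
      _ ≤ Nv ^ 2 * ((‖g‖ * opMatrixNorm T * ‖h‖) ^ 2 * ∑ jl, ‖β jl‖ ^ 2) := by gcongr
      _ = _ := by ring
  rw [hinner]
  calc _ ≤ ∑ ik, ‖α ik‖ * ‖t ik‖ := (norm_sum_le _ _).trans (by simp)
    _ ≤ √(∑ ik, ‖α ik‖ ^ 2) * √(∑ ik, ‖t ik‖ ^ 2) := Real.sum_mul_le_sqrt_mul_sqrt _ _ _
    _ ≤ √(∑ ik, ‖α ik‖ ^ 2) * √((Nv * (‖g‖ * opMatrixNorm T * ‖h‖)) ^ 2 * ∑ jl, ‖β jl‖ ^ 2) := by gcongr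
    _ = _ := by
      rw [Real.sqrt_mul (by positivity), Real.sqrt_sq (by positivity), hK]; ring
end opm

/-- The slice map `φ ⊗ id : A ⊗ B → B`. -/
def sliceMap {A B : Type u} [CommCStarAlgebra A] [NormedRing B] [NormedAlgebra ℂ B]
    (φ : A →ₐ[ℂ] ℂ) : A ⊗[ℂ] B →ₗ[ℂ] B :=
  (TensorProduct.lid ℂ B).toLinearMap ∘ₗ (TensorProduct.map φ.toLinearMap LinearMap.id)

lemma sliceMap_tmul {A B : Type u} [CommCStarAlgebra A] [NormedRing B] [NormedAlgebra ℂ B]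
    (φ : A →ₐ[ℂ] ℂ) (a : A) (b : B) : sliceMap φ (a ⊗ₜ[ℂ] b) = φ a • b := by
  simp [sliceMap]

lemma isCStarNorm_nonneg {M : Type*} [NonUnitalRing M] [StarRing M] [Module ℂ M]
    {N : M → ℝ} (hN : IsCStarNorm N) (x : M) : 0 ≤ N x := by
  have N0 : N 0 = 0 := by simpa using hN.smul_eq 0 0
  have h1 := hN.add_le x ((-1 : ℂ) • x)
  rw [hN.smul_eq] at h1
  simp [N0] at h1
  linarith

lemma matrixNorm_nonneg {B : Type u} [NormedRing B] [NormedAlgebra ℂ B]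
    (eB : OperatorAlgebraEmbedding B) (q : ℕ) (w : Matrix (Fin q) (Fin q) B) :
    0 ≤ eB.matrixNorm q w := by
  let _ := eB.normH
  let _ := eB.ipsH
  exact opMatrixNorm_nonneg _

lemma osProjNorm_set_nonempty {A B : Type u}
    [CommCStarAlgebra A] [NormedRing B] [NormedAlgebra ℂ B]
    (NA : ∀ p : ℕ, Matrix (Fin p) (Fin p) A → ℝ)
    (NB : ∀ q : ℕ, Matrix (Fin q) (Fin q) B → ℝ) (u : A ⊗[ℂ] B) :
    { r : ℝ | ∃ (p q : ℕ) (α : Fin p × Fin q → ℂ) (v : Matrix (Fin p) (Fin p) A)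
      (w : Matrix (Fin q) (Fin q) B) (β : Fin p × Fin q → ℂ),
      u = ∑ ik : Fin p × Fin q, ∑ jl : Fin p × Fin q,
            (α ik * β jl) • (v ik.1 jl.1 ⊗ₜ[ℂ] w ik.2 jl.2) ∧
      r = Real.sqrt (∑ ik, ‖α ik‖ ^ 2) * NA p v * NB q w *
            Real.sqrt (∑ jl, ‖β jl‖ ^ 2) }.Nonempty := by
  obtain ⟨n, a, b, hu⟩ : ∃ (n : ℕ) (a : Fin n → A) (b : Fin n → B), u = ∑ i, a i ⊗ₜ[ℂ] b i := by
    obtain ⟨S, hS⟩ := TensorProduct.exists_finset u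
    refine ⟨S.card, fun i => (S.equivFin.symm i : A × B).1, fun i => (S.equivFin.symm i : A × B).2, ?_⟩
    rw [hS, Equiv.sum_comp S.equivFin.symm (fun x : S => (x : A × B).1 ⊗ₜ[ℂ] (x : A × B).2)]
    exact (Finset.sum_coe_sort S (fun x : A × B => x.1 ⊗ₜ[ℂ] x.2)).symm
  refine ⟨_, n, n, fun ik => if ik.1 = ik.2 then 1 else 0, Matrix.diagonal a, Matrix.diagonal b,
    fun ik => if ik.1 = ik.2 then 1 else 0, ?_, rfl⟩
  rw [hu]
  simp only [Fintype.sum_prod_type]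
  refine Finset.sum_congr rfl fun i _ => ?_
  rw [Finset.sum_eq_single i (by
    intro k _ hk
    simp [hk.symm]) (by simp)]
  rw [Finset.sum_eq_single i (by
    intro j _ hj
    simp [Matrix.diagonal_apply_ne' _ hj]) (by simp)]
  rw [Finset.sum_eq_single i (by
    intro j _ hj
    simp [hj.symm]) (by simp)]
  simp

lemma sliceMap_bound {A B : Type u} [CommCStarAlgebra A]
    [NormedRing B] [NormedAlgebra ℂ B] (eB : OperatorAlgebraEmbedding B)
    (NA : ∀ p : ℕ, Matrix (Fin p) (Fin p) A → ℝ) (hNA : ∀ p, IsCStarNorm (NA p))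
    (φ : A →ₐ[ℂ] ℂ) (u : A ⊗[ℂ] B) :
    eB.c * ‖sliceMap φ u‖ ≤ osProjNorm NA eB.matrixNorm u := by
  let _ := eB.normH
  let _ := eB.ipsH
  refine (eB.lower _).trans ?_
  refine le_csInf (osProjNorm_set_nonempty _ _ u) ?_
  rintro _ ⟨p, q, α, v, w, β, rfl, rfl⟩
  have := slice_norm_bound (fun i j => φ (v i j)) (NA p v) (isCStarNorm_nonneg (hNA p) v)
    (fun z => cstarNorm_matrix_bound (NA p) (hNA p) φ v z) (w.map eB.ρ) α β
  refine le_trans (le_of_eq ?_) this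
  simp only [map_sum, map_smul, sliceMap_tmul, Matrix.map_apply]

lemma osProjNorm_one_tmul_le {A B : Type u} [CommCStarAlgebra A]
    [NormedRing B] [NormedAlgebra ℂ B] (eB : OperatorAlgebraEmbedding B)
    (NA : ∀ p : ℕ, Matrix (Fin p) (Fin p) A → ℝ) (hNA : ∀ p, IsCStarNorm (NA p)) (a : A) (b : B) :
    osProjNorm NA eB.matrixNorm (a ⊗ₜ[ℂ] b) ≤ (NA 1 (fun _ _ => a)) * (eB.C * ‖b‖) := by
  let _ := eB.normH
  let _ := eB.ipsH
  have h1 : osProjNorm NA eB.matrixNorm (a ⊗ₜ[ℂ] b) ≤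
      (NA 1 (fun _ _ => a)) * eB.matrixNorm 1 (fun _ _ => b) := by
    refine csInf_le ⟨0, ?_⟩ ?_
    · rintro _ ⟨p, q, α, v, w, β, -, rfl⟩
      have h1 := isCStarNorm_nonneg (hNA p) v
      have h2 := matrixNorm_nonneg eB q w
      positivity
    · refine ⟨1, 1, fun _ => 1, fun _ _ => a, fun _ _ => b, fun _ => 1, ?_, ?_⟩
      · simp
      · simp
  refine h1.trans ?_
  have h2 := isCStarNorm_nonneg (hNA 1) (fun _ _ => a)
  refine mul_le_mul_of_nonneg_left ?_ h2
  exact (opMatrixNorm_one_le _).trans (eB.upper b)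

section main
variable {A B X : Type u} [CommCStarAlgebra A]
    [NormedRing B] [NormedAlgebra ℂ B] [CompleteSpace B]
    [NormedRing X] [NormedAlgebra ℂ X] [CompleteSpace X]

/-- The continuous slice homomorphism on the completion. -/
lemma exists_slice (ι : A ⊗[ℂ] B →ₗ[ℂ] X) (hd : DenseRange ι)
    (hmul : ∀ (a c : A) (b d : B),
      ι (a ⊗ₜ[ℂ] b) * ι (c ⊗ₜ[ℂ] d) = ι ((a * c) ⊗ₜ[ℂ] (b * d)))
    (hone : ι ((1 : A) ⊗ₜ[ℂ] (1 : B)) = 1) (φ : A →ₐ[ℂ] ℂ)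
    (hb : ∃ C, ∀ u : A ⊗[ℂ] B, ‖sliceMap φ u‖ ≤ C * ‖ι u‖) :
    ∃ R : X →ₐ[ℂ] B, Continuous R ∧ ∀ u, R (ι u) = sliceMap φ u := by
  let R₀ : X →L[ℂ] B := (sliceMap φ).extendOfNorm ι
  have hR₀ : ∀ u, R₀ (ι u) = sliceMap φ u := fun u => LinearMap.extendOfNorm_eq hd hb u
  have h1 : ∀ u w : A ⊗[ℂ] B, R₀ (ι u * ι w) = R₀ (ι u) * R₀ (ι w) := by
    intro u w
    induction u using TensorProduct.induction_on with
    | zero => simp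
    | add x y hx hy => simp only [map_add, add_mul, hx, hy]
    | tmul a b =>
      induction w using TensorProduct.induction_on with
      | zero => simp
      | add x y hx hy => simp only [map_add, mul_add, hx, hy]
      | tmul c d =>
        rw [hmul, hR₀, hR₀, hR₀, sliceMap_tmul, sliceMap_tmul, sliceMap_tmul, map_mul,
          smul_mul_smul_comm]
  have h2 : ∀ x y : X, R₀ (x * y) = R₀ x * R₀ y := by
    intro x y
    refine hd.induction_on₂ (p := fun x y => R₀ (x * y) = R₀ x * R₀ y) ?_ h1 x y
    exact isClosed_eq (by fun_prop) (by fun_prop)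
  refine ⟨AlgHom.ofLinearMap R₀.toLinearMap ?_ h2, R₀.continuous, hR₀⟩
  show R₀ 1 = 1
  rw [← hone, hR₀, sliceMap_tmul]; simp

/-- A maximal left ideal of the completion determines a character of `A`. -/
lemma exists_char_of_maximal (ι : A ⊗[ℂ] B →ₗ[ℂ] X) (hd : DenseRange ι)
    (hmul : ∀ (a c : A) (b d : B),
      ι (a ⊗ₜ[ℂ] b) * ι (c ⊗ₜ[ℂ] d) = ι ((a * c) ⊗ₜ[ℂ] (b * d)))
    (hone : ι ((1 : A) ⊗ₜ[ℂ] (1 : B)) = 1)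
    (hcont : Continuous fun a : A => ι (a ⊗ₜ[ℂ] (1 : B)))
    (L : Ideal X) (hL : L.IsMaximal) :
    ∃ φ : A →ₐ[ℂ] ℂ, ∀ a, φ a = 0 → ι (a ⊗ₜ[ℂ] (1 : B)) ∈ L := by
  have hcen : ∀ (a : A) (x : X), ι (a ⊗ₜ[ℂ] (1 : B)) * x = x * ι (a ⊗ₜ[ℂ] (1 : B)) := by
    intro a x
    refine hd.induction_on (p := fun x => ι (a ⊗ₜ[ℂ] (1 : B)) * x = x * ι (a ⊗ₜ[ℂ] (1 : B))) x
      (isClosed_eq (by fun_prop) (by fun_prop)) ?_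
    intro u
    induction u using TensorProduct.induction_on with
    | zero => simp
    | add x y hx hy => simp only [map_add, add_mul, mul_add, hx, hy]
    | tmul c d => rw [hmul, hmul, mul_comm a c]; simp
  let P : Ideal A :=
    { carrier := {a | ι (a ⊗ₜ[ℂ] (1 : B)) ∈ L}
      add_mem' := by
        intro a b ha hb
        show ι ((a + b) ⊗ₜ[ℂ] (1 : B)) ∈ L
        rw [TensorProduct.add_tmul, map_add]; exact L.add_mem ha hb
      zero_mem' := by
        show ι ((0 : A) ⊗ₜ[ℂ] (1 : B)) ∈ L
        simp
      smul_mem' := by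
        intro c a ha
        show ι ((c * a) ⊗ₜ[ℂ] (1 : B)) ∈ L
        have := hmul c a (1 : B) 1
        rw [mul_one] at this
        rw [← this]
        exact L.mul_mem_left _ ha }
  have hPmem : ∀ a, a ∈ P ↔ ι (a ⊗ₜ[ℂ] (1 : B)) ∈ L := fun a => Iff.rfl
  refine exists_char_of_closed_prime P ?_ ⟨?_, ?_⟩
  · exact (Ideal.IsMaximal.isClosed (I := L)).preimage hcont
  · rw [Ideal.ne_top_iff_one, hPmem, hone]
    exact (Ideal.ne_top_iff_one L).1 hL.ne_top
  · intro a b hab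
    rw [hPmem, hPmem] at *
    by_contra hcon
    push Not at hcon
    obtain ⟨ha, hb⟩ := hcon
    -- the left ideal of all `x` with `x a ∈ L`
    let Q : Ideal X :=
      { carrier := {x | x * ι (a ⊗ₜ[ℂ] (1 : B)) ∈ L}
        add_mem' := by
          intro x y hx hy
          show (x + y) * _ ∈ L
          rw [add_mul]; exact L.add_mem hx hy
        zero_mem' := by
          show 0 * _ ∈ L
          simp
        smul_mem' := by
          intro c x hx
          show (c * x) * _ ∈ L
          rw [mul_assoc]; exact L.mul_mem_left _ hx }
    have hQmem : ∀ x, x ∈ Q ↔ x * ι (a ⊗ₜ[ℂ] (1 : B)) ∈ L := fun a => Iff.rfl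
    have hQtop : Q ≠ ⊤ := by
      rw [Ideal.ne_top_iff_one, hQmem, one_mul]; exact ha
    have hLQ : L ≤ Q := fun x hx => by
      rw [hQmem, ← hcen]; exact L.mul_mem_left _ hx
    have hEq := hL.eq_of_le hQtop hLQ
    apply hb
    rw [hEq, hQmem, ← hcen, hmul, mul_one]
    exact hab

/-- Elements whose slices are all left invertible are left invertible. -/
lemma left_invertible_of_slices (ι : A ⊗[ℂ] B →ₗ[ℂ] X) (hd : DenseRange ι)
    (hmul : ∀ (a c : A) (b d : B),
      ι (a ⊗ₜ[ℂ] b) * ι (c ⊗ₜ[ℂ] d) = ι ((a * c) ⊗ₜ[ℂ] (b * d)))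
    (hone : ι ((1 : A) ⊗ₜ[ℂ] (1 : B)) = 1)
    (hcont : Continuous fun a : A => ι (a ⊗ₜ[ℂ] (1 : B)))
    (hcont' : Continuous fun b : B => ι ((1 : A) ⊗ₜ[ℂ] b))
    (R : (A →ₐ[ℂ] ℂ) → X →ₐ[ℂ] B) (hRc : ∀ φ, Continuous (R φ))
    (hR : ∀ φ u, R φ (ι u) = sliceMap φ u) (x : X) (hx : ∀ φ, IsUnit (R φ x)) :
    ∃ y, y * x = 1 := by
  by_contra hcon
  have hne : Ideal.span {x} ≠ ⊤ := by
    rw [Ideal.ne_top_iff_one, Ideal.mem_span_singleton']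
    exact hcon
  obtain ⟨L, hL, hxL⟩ := Ideal.exists_le_maximal _ hne
  obtain ⟨φ, hφ⟩ := exists_char_of_maximal ι hd hmul hone hcont L hL
  have key : ∀ y : X, y - ι ((1 : A) ⊗ₜ[ℂ] (R φ y)) ∈ L := by
    intro y
    have hLc : IsClosed (L : Set X) := Ideal.IsMaximal.isClosed
    refine hd.induction_on (p := fun y => y - ι ((1 : A) ⊗ₜ[ℂ] (R φ y)) ∈ L) y
      (hLc.preimage (continuous_id.sub (hcont'.comp (hRc φ)))) ?_
    intro u
    induction u using TensorProduct.induction_on with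
    | zero => simp
    | add x y hx hy =>
      have := L.add_mem hx hy
      simp only [map_add, TensorProduct.tmul_add]
      convert this using 1
      abel
    | tmul a b =>
      have e : ι (a ⊗ₜ[ℂ] b) - ι ((1 : A) ⊗ₜ[ℂ] (R φ (ι (a ⊗ₜ[ℂ] b)))) =
          ι ((1 : A) ⊗ₜ[ℂ] b) * ι ((a - φ a • (1 : A)) ⊗ₜ[ℂ] (1 : B)) := by
        rw [hR, sliceMap_tmul, hmul, one_mul, mul_one, TensorProduct.sub_tmul, map_sub,
          TensorProduct.tmul_smul, TensorProduct.smul_tmul']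
      rw [e]
      apply L.mul_mem_left
      apply hφ
      simp
  have h1 : ι ((1 : A) ⊗ₜ[ℂ] (R φ x)) ∈ L := by
    have hx' : x ∈ L := hxL (Ideal.mem_span_singleton_self x)
    have := L.sub_mem hx' (key x)
    simpa using this
  obtain ⟨w, hw⟩ := (hx φ).exists_left_inv
  have h2 := L.mul_mem_left (ι ((1 : A) ⊗ₜ[ℂ] w)) h1
  rw [hmul, hw, one_mul, hone] at h2
  exact (Ideal.ne_top_iff_one L).1 hL.ne_top h2

/-- Slices of self-adjoint elements have real spectrum, even without continuity of the
involution on the completion. -/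
lemma slice_isUnit [StarRing B] [StarModule ℂ B] [StarRing X]
    (hBsymm : ∀ b : B, IsSelfAdjoint b → spectrum ℂ b ⊆ {z : ℂ | z.im = 0})
    (ι : A ⊗[ℂ] B →ₗ[ℂ] X) (hd : DenseRange ι)
    (hone : ι ((1 : A) ⊗ₜ[ℂ] (1 : B)) = 1)
    (hstar : ∀ (a : A) (b : B), star (ι (a ⊗ₜ[ℂ] b)) = ι (star a ⊗ₜ[ℂ] star b))
    (φ : A →ₐ[ℂ] ℂ) (R : X →ₐ[ℂ] B) (hRc : Continuous R) (hR : ∀ u, R (ι u) = sliceMap φ u)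
    (x : X) (hx : IsSelfAdjoint x) (μ : ℂ) (hμ : μ.im ≠ 0) :
    IsUnit (R (x - algebraMap ℂ X μ)) := by
  have hφstar : ∀ a, φ (star a) = star (φ a) := fun a =>
    map_star (WeakDual.CharacterSpace.equivAlgHom.symm φ) a
  have hRstar : ∀ u, R (star (ι u)) = star (R (ι u)) := by
    intro u
    induction u using TensorProduct.induction_on with
    | zero => simp
    | add x y hx hy => simp only [map_add, star_add, hx, hy]
    | tmul a b => rw [hstar, hR, hR, sliceMap_tmul, sliceMap_tmul, hφstar, star_smul]
  have halg : ∀ c : ℂ, algebraMap ℂ X c = ι ((c • (1 : A)) ⊗ₜ[ℂ] (1 : B)) := by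
    intro c
    rw [← TensorProduct.smul_tmul', map_smul, hone, Algebra.algebraMap_eq_smul_one]
  have hstaralg : ∀ c : ℂ, star (algebraMap ℂ X c) = algebraMap ℂ X (star c) := by
    intro c
    rw [halg, halg, hstar, star_smul, star_one, star_one]
  let σ : X →ₐ[ℂ] B :=
    { toFun := fun y => star (R (star y))
      map_one' := by simp
      map_mul' := by intro y z; simp
      map_zero' := by simp
      map_add' := by intro y z; simp
      commutes' := by
        intro c
        rw [hstaralg, AlgHom.commutes, ← algebraMap_star_comm, star_star] }
  have hσ : ∀ y, σ y = star (R (star y)) := fun y => rfl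
  have hσι : ∀ u, σ (ι u) = R (ι u) := by
    intro u; rw [hσ, hRstar, star_star]
  set b := R x with hb
  set d := b - star b with hdd
  have hσx : σ x = star b := by rw [hσ, hx.star_eq]
  have hj : ∀ c : B, R (ι ((1 : A) ⊗ₜ[ℂ] c)) = c := fun c => by
    rw [hR, sliceMap_tmul]; simp
  have hrad : ∀ c : B, IsUnit (1 - c * d) := by
    intro c
    obtain ⟨s, hs, hsx⟩ := mem_closure_iff_seq_limit.1 (hd x)
    choose w hw using hs
    have hs0 : Filter.Tendsto (fun n => ι ((1 : A) ⊗ₜ[ℂ] c) * (s n - x)) Filter.atTop (nhds 0) := by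
      have := (hsx.sub_const x).const_mul (ι ((1 : A) ⊗ₜ[ℂ] c))
      simpa using this
    have hRs : Filter.Tendsto (fun n => R (s n)) Filter.atTop (nhds b) :=
      (hRc.tendsto x).comp hsx
    have hcd : σ (ι ((1 : A) ⊗ₜ[ℂ] (c * d))) = c * d := by rw [hσι, hj]
    have := ransford σ (ι ((1 : A) ⊗ₜ[ℂ] (c * d))) _ hs0 ?_
    · rwa [hcd] at this
    · rw [hcd]
      have e : ∀ n, σ (ι ((1 : A) ⊗ₜ[ℂ] c) * (s n - x)) = c * (R (s n) - star b) := by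
        intro n
        rw [map_mul, map_sub, hσι, hj, hσx, ← hw n, hσι]
      simp only [e]
      exact (hRs.sub_const (star b)).const_mul c
  set h := (1/2 : ℂ) • (b + star b) with hh
  have hhsa : IsSelfAdjoint h := by
    rw [IsSelfAdjoint, hh, star_smul, star_add, star_star, add_comm (star b)]
    simp
  have hunit : IsUnit (h - algebraMap ℂ B μ) := by
    by_contra hcon
    have : μ ∈ spectrum ℂ h := by
      rw [spectrum.mem_iff]
      intro h1
      apply hcon
      have := h1.neg
      rwa [neg_sub] at this
    exact hμ (hBsymm h hhsa this)
  obtain ⟨U, hU⟩ := hunit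
  have hbh : b = h + (1/2 : ℂ) • d := by
    rw [hh, hdd, ← smul_add]
    rw [show b + star b + (b - star b) = (2 : ℂ) • b by rw [two_smul]; abel, smul_smul]
    norm_num
  have hfin : R (x - algebraMap ℂ X μ) = U * (1 - (-(1/2 : ℂ) • (U⁻¹ : Bˣ) : B) * d) := by
    have e1 : (U : B) * ((-(1/2 : ℂ) • ((U⁻¹ : Bˣ) : B)) * d) = -(1/2 : ℂ) • d := by
      rw [smul_mul_assoc, mul_smul_comm, Units.mul_inv_cancel_left]
    have e2 : b = h + (1/2 : ℂ) • d := hbh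
    rw [map_sub, AlgHom.commutes, ← hb, mul_sub, mul_one, e1, hU, neg_smul]
    generalize algebraMap ℂ B μ = m
    calc b - m = (h + (1/2 : ℂ) • d) - m := congrArg (· - m) e2
      _ = _ := by abel
  rw [hfin]
  exact U.isUnit.mul (hrad _)
end main
/-- Let `A` be a commutative unital C⋆-algebra and let `B` be a unital
operator algebra with an isometric involution which is symmetric as a Banach `*`-algebra.
Then the Banach `*`-algebra `A ⊗̂ B` (realized as the unital tensor completion `X` for the
operator space projective norm built from the canonical matrix C⋆-norms on `A` and the
operator space structure of `B`) is symmetric: every self-adjoint element has real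
spectrum. -/
theorem osProjTensor_symmetric_of_comm_and_symmetric {A B X : Type u}
    [CommCStarAlgebra A]
    [NormedRing B] [NormedAlgebra ℂ B] [CompleteSpace B] [StarRing B] [StarModule ℂ B]
    (hBstar : ∀ b : B, ‖star b‖ = ‖b‖)
    (eB : OperatorAlgebraEmbedding B)
    (hBsymm : ∀ b : B, IsSelfAdjoint b → spectrum ℂ b ⊆ {z : ℂ | z.im = 0})
    [NormedRing X] [NormedAlgebra ℂ X] [CompleteSpace X] [StarRing X]
    (NA : ∀ p : ℕ, Matrix (Fin p) (Fin p) A → ℝ) (hNA : ∀ p, IsCStarNorm (NA p))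
    (ι : A ⊗[ℂ] B →ₗ[ℂ] X)
    (hX : IsTensorCompletion (osProjNorm NA eB.matrixNorm) X ι)
    (hone : ι ((1 : A) ⊗ₜ[ℂ] (1 : B)) = 1) :
    ∀ x : X, IsSelfAdjoint x → spectrum ℂ x ⊆ {z : ℂ | z.im = 0} := by
  intro x hx μ hμ
  by_contra him
  have him : μ.im ≠ 0 := him
  have hd := hX.dense
  have hmul := hX.mul_tmul
  have hbound : ∀ (a : A) (b : B),
      ‖ι (a ⊗ₜ[ℂ] b)‖ ≤ (NA 1 (fun _ _ => a)) * (eB.C * ‖b‖) := fun a b => by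
    rw [hX.norm_eq]; exact osProjNorm_one_tmul_le eB NA hNA a b
  have hcont' : Continuous fun b : B => ι ((1 : A) ⊗ₜ[ℂ] b) := by
    refine AddMonoidHomClass.continuous_of_bound
      (ι ∘ₗ TensorProduct.mk ℂ A B 1) ((NA 1 (fun _ _ => 1)) * eB.C) fun b => ?_
    rw [mul_assoc]; exact hbound 1 b
  have hcont : Continuous fun a : A => ι (a ⊗ₜ[ℂ] (1 : B)) := by
    have h1 := hNA 1
    have hst : ∀ a : A,
        NA 1 (fun _ _ => star a * a) = NA 1 (fun _ _ => a) * NA 1 (fun _ _ => a) := by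
      intro a
      have e0 : (Matrix.of fun _ _ => star a * a : Matrix (Fin 1) (Fin 1) A)
          = star (Matrix.of fun _ _ => a) * Matrix.of fun _ _ => a := by
        ext i j
        simp [Matrix.mul_apply, Matrix.star_apply]
      exact (congrArg (NA 1) e0).trans (h1.star_mul_self (Matrix.of fun _ _ => a))
    obtain ⟨nneg, nsa⟩ := sa_le_of_cstar (fun a : A => NA 1 (fun _ _ => a))
      (fun x y => h1.add_le (fun _ _ => x) (fun _ _ => y))
      (fun c x => h1.smul_eq c (fun _ _ => x))
      hst
    have hle : ∀ a : A, NA 1 (fun _ _ => a) ≤ ‖a‖ := by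
      intro a
      have e1 : NA 1 (fun _ _ => star a * a) = NA 1 (fun _ _ => a) * NA 1 (fun _ _ => a) := hst a
      have e2 : NA 1 (fun _ _ => star a * a) ≤ ‖star a * a‖ := nsa _ (IsSelfAdjoint.star_mul_self a)
      rw [e1, CStarRing.norm_star_mul_self] at e2
      exact abs_le_of_sq_le_sq' (by nlinarith) (norm_nonneg a) |>.2
    have hC : 0 ≤ eB.C * ‖(1 : B)‖ := by
      let _ := eB.normH
      let _ := eB.ipsH
      exact (norm_nonneg _).trans (eB.upper 1)
    refine AddMonoidHomClass.continuous_of_bound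
      (ι ∘ₗ (TensorProduct.mk ℂ A B).flip 1) (eB.C * ‖(1 : B)‖) fun a => ?_
    refine (hbound a 1).trans ?_
    rw [mul_comm]
    exact mul_le_mul_of_nonneg_left (hle a) hC
  have hsl : ∀ φ : A →ₐ[ℂ] ℂ, ∃ R : X →ₐ[ℂ] B, Continuous R ∧ ∀ u, R (ι u) = sliceMap φ u := by
    intro φ
    refine exists_slice ι hd hmul hone φ ⟨eB.c⁻¹, fun u => ?_⟩
    rw [hX.norm_eq, le_inv_mul_iff₀ eB.c_pos]
    exact sliceMap_bound eB NA hNA φ u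
  choose R hRc hR using hsl
  have hleft : ∀ ν : ℂ, ν.im ≠ 0 → ∃ y, y * (x - algebraMap ℂ X ν) = 1 := fun ν hν =>
    left_invertible_of_slices ι hd hmul hone hcont hcont' R hRc hR _ fun φ =>
      slice_isUnit hBsymm ι hd hone hX.star_tmul φ (R φ) (hRc φ) (hR φ) x hx ν hν
  have hstaralg : ∀ c : ℂ, star (algebraMap ℂ X c) = algebraMap ℂ X (star c) := by
    have halg : ∀ c : ℂ, algebraMap ℂ X c = ι ((c • (1 : A)) ⊗ₜ[ℂ] (1 : B)) := by
      intro c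
      rw [← TensorProduct.smul_tmul', map_smul, hone, Algebra.algebraMap_eq_smul_one]
    intro c
    rw [halg, halg, hX.star_tmul, star_smul, star_one, star_one]
  obtain ⟨y, hy⟩ := hleft μ him
  obtain ⟨z, hz⟩ := hleft (star μ) (by simpa using him)
  have hz' : (x - algebraMap ℂ X μ) * star z = 1 := by
    have := congrArg star hz
    rwa [star_mul, star_sub, hx.star_eq, hstaralg, star_star, star_one] at this
  refine (spectrum.mem_iff.1 hμ) ?_
  rw [← neg_sub, IsUnit.neg_iff]
  have hyz : y = star z := left_inv_eq_right_inv hy hz'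
  exact ⟨⟨_, y, by rw [hyz]; exact hz', hy⟩, rfl⟩

end
end
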